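/- arXiv:1803.03588 — 2 statements merged into one kernel-verified Lean document; each statement's English description precedes it below -/
import Mathlib

section
/- There exists a constant C > 0 such that for every real d with 0 < d ≤ 1/4, setting δ = 2^{−C·(log(1/d))²/log log(1/d)}, every C₅-free graph G contains a subset X ⊆ V(G) with |X| ≥ δ·|V(G)| such that in one of the induced subgraph G[X] or the induced subgraph of the complement graph of G on X, every vertex has degree at most d·|X|. -/
open SimpleGraph
open scoped Classical

/-- `G` is `C₅`-free: no induced subgraph of `G` is isomorphic to the 5-cycle. -/
def C5Free {V : Type} (G : SimpleGraph V) : Prop :=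
  ¬ Nonempty (cycleGraph 5 ↪g G)


/-- number of neighbours of `v` in `X`, as a real number -/
noncomputable def dg {V : Type} (G : SimpleGraph V) (v : V) (X : Finset V) : ℝ :=
  ((X.filter (fun u => G.Adj v u)).card : ℝ)

/-- elementary form of `C₅`-freeness -/
def NoC5 {V : Type} (G : SimpleGraph V) : Prop :=
  ∀ a b c d e : V, G.Adj a b → G.Adj b c → G.Adj c d → G.Adj d e → G.Adj e a →
    ¬ G.Adj a c → ¬ G.Adj b d → ¬ G.Adj c e → ¬ G.Adj d a → ¬ G.Adj e b → False

theorem noC5_of_free {V : Type} (G : SimpleGraph V) (h : C5Free G) : NoC5 G := by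
  intro a b c d e hab hbc hcd hde hea hac hbd hce hda heb
  apply h
  have hinj : Function.Injective (![a, b, c, d, e] : Fin 5 → V) := by
    have h1 : a ≠ b := hab.ne
    have h2 : b ≠ c := hbc.ne
    have h3 : c ≠ d := hcd.ne
    have h4 : d ≠ e := hde.ne
    have h5 : e ≠ a := hea.ne
    have h6 : a ≠ c := by rintro rfl; exact hce hea.symm
    have h7 : b ≠ d := by rintro rfl; exact hda hab.symm
    have h8 : c ≠ e := by rintro rfl; exact hac hea.symm
    have h9 : d ≠ a := by rintro rfl; exact hbd hab.symm
    have h10 : e ≠ b := by rintro rfl; exact hbd hde.symm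
    intro i j hij
    fin_cases i <;> fin_cases j <;> simp_all [eq_comm]
  refine ⟨⟨⟨![a, b, c, d, e], hinj⟩, ?_⟩⟩
  intro i j
  fin_cases i <;> fin_cases j <;>
    simp [cycleGraph_adj, hab, hbc, hcd, hde, hea, hac, hbd, hce, hda, heb, hab.symm, hbc.symm,
      hcd.symm, hde.symm, hea.symm, G.adj_comm c a, G.adj_comm d b, G.adj_comm e c,
      G.adj_comm a d, G.adj_comm b e] <;> decide

theorem NoC5.compl {V : Type} {G : SimpleGraph V} (h : NoC5 G) : NoC5 Gᶜ := by
  intro a b c d e hab hbc hcd hde hea hac hbd hce hda heb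
  have h6 : a ≠ c := by rintro rfl; exact hce hea.symm
  have h7 : b ≠ d := by rintro rfl; exact hda hab.symm
  have h8 : c ≠ e := by rintro rfl; exact hac hea.symm
  have h9 : d ≠ a := by rintro rfl; exact hbd hab.symm
  have h10 : e ≠ b := by rintro rfl; exact hbd hde.symm
  simp only [compl_adj, not_and, not_not] at *
  exact h a c e b d (hac h6) (hce h8) (heb h10) (hbd h7) (hda h9)
    (fun h' => hea.2 h'.symm) (fun h' => hbc.2 h'.symm) (fun h' => hde.2 h'.symm) (fun h' => hab.2 h'.symm) (fun h' => hcd.2 h'.symm)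

theorem dg_nonneg {V : Type} (G : SimpleGraph V) (v : V) (X : Finset V) : 0 ≤ dg G v X := by
  unfold dg; positivity

theorem dg_le {V : Type} (G : SimpleGraph V) (v : V) (X : Finset V) : dg G v X ≤ X.card := by
  unfold dg; exact_mod_cast Finset.card_filter_le _ _

theorem dg_mono {V : Type} (G : SimpleGraph V) (v : V) {X Y : Finset V} (h : X ⊆ Y) :
    dg G v X ≤ dg G v Y := by
  unfold dg; exact_mod_cast Finset.card_le_card (Finset.filter_subset_filter _ h)

theorem dg_eq_sum {V : Type} (G : SimpleGraph V) (v : V) (X : Finset V) :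
    dg G v X = ∑ u ∈ X, if G.Adj v u then (1:ℝ) else 0 := by
  unfold dg; rw [Finset.card_filter]; push_cast; rfl

theorem dg_comm {V : Type} (G : SimpleGraph V) (A B : Finset V) :
    ∑ a ∈ A, dg G a B = ∑ b ∈ B, dg G b A := by
  simp only [dg_eq_sum]
  rw [Finset.sum_comm]
  simp only [G.adj_comm]

/-- Markov's inequality -/
theorem markov {V : Type} (A : Finset V) (f : V → ℝ) (hf : ∀ a ∈ A, 0 ≤ f a) (M : ℝ) :
    M * ((A.filter (fun a => M < f a)).card : ℝ) ≤ ∑ a ∈ A, f a := by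
  calc M * ((A.filter (fun a => M < f a)).card : ℝ)
      = ∑ a ∈ A.filter (fun a => M < f a), M := by rw [Finset.sum_const, nsmul_eq_mul]; ring
    _ ≤ ∑ a ∈ A.filter (fun a => M < f a), f a :=
        Finset.sum_le_sum (fun a ha => (Finset.mem_filter.1 ha).2.le)
    _ ≤ ∑ a ∈ A, f a := Finset.sum_le_sum_of_subset_of_nonneg (Finset.filter_subset _ _)
        (fun a ha _ => hf a ha)

theorem layer {V : Type} (S : Finset V) (f : V → ℝ) (a : ℕ) (ha : a ≤ S.card) :
    ∃ L ⊆ S, L.card = a ∧ ∀ u ∈ L, ∀ w ∈ S \ L, f u ≤ f w := by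
  induction a with
  | zero => exact ⟨∅, by simp, by simp, by simp⟩
  | succ a ih =>
    obtain ⟨L, hLS, hLc, hL⟩ := ih (by omega)
    have hne : (S \ L).Nonempty := by
      rw [← Finset.card_pos, Finset.card_sdiff_of_subset hLS]; omega
    obtain ⟨m, hm, hmin⟩ := Finset.exists_min_image (S \ L) f hne
    have hm' := Finset.mem_sdiff.1 hm
    refine ⟨insert m L, ?_, ?_, ?_⟩
    · intro x hx
      rcases Finset.mem_insert.1 hx with rfl | h
      · exact hm'.1
      · exact hLS h
    · rw [Finset.card_insert_of_notMem hm'.2, hLc]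
    · intro u hu w hw
      have hw' : w ∈ S \ L := by
        simp only [Finset.mem_sdiff, Finset.mem_insert, not_or] at hw ⊢
        exact ⟨hw.1, hw.2.2⟩
      rcases Finset.mem_insert.1 hu with rfl | h
      · exact hmin w hw'
      · exact hL u h w hw'

/-- there is no asymmetric sparse pair in `T` -/
def NA {V : Type} (G : SimpleGraph V) (p d : ℝ) (T : Finset V) : Prop :=
  ∀ A ⊆ T, p * T.card ≤ A.card →
    (((T \ A).filter (fun b => dg G b A ≤ d * A.card)).card : ℝ) < T.card / 50

theorem key_count {V : Type} (G : SimpleGraph V) (T : Finset V) (d p : ℝ) (hd : 0 < d)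
    (hna : NA G p d T)
    (hdeg : ∀ v ∈ T, dg G v T ≤ T.card / 200)
    (bot top : Finset V) (hbot : bot ⊆ T) (htop : top ⊆ T) (hdisj : Disjoint bot top)
    (htopc : (T.card : ℝ) / 4 ≤ top.card) (b x : V) (hb : b ∈ T) (hx : x ∈ T) :
    T.card * d / 16 *
      (((bot.filter (fun t => G.Adj t b ∧ G.Adj t x)).card : ℝ) - p * T.card) ≤
    ∑ y ∈ top.filter (fun y => ¬ G.Adj y b ∧ ¬ G.Adj y x),
      dg G y (bot.filter (fun t => G.Adj t b ∧ G.Adj t x)) := by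
  set X := bot.filter (fun t => G.Adj t b ∧ G.Adj t x) with hX
  set Y := top.filter (fun y => ¬ G.Adj y b ∧ ¬ G.Adj y x) with hY
  by_cases hs : p * T.card ≤ X.card
  swap
  · refine le_trans ?_ (Finset.sum_nonneg (fun y _ => dg_nonneg G y X))
    apply mul_nonpos_of_nonneg_of_nonpos
    · positivity
    · linarith
  have hXT : X ⊆ T := (Finset.filter_subset _ _).trans hbot
  have h1 := hna X hXT hs
  set L := (T \ X).filter (fun b => dg G b X ≤ d * X.card) with hL
  have hYc : (top.card : ℝ) ≤ Y.card + dg G b T + dg G x T := by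
    have : top ⊆ Y ∪ (T.filter (fun u => G.Adj b u)) ∪ (T.filter (fun u => G.Adj x u)) := by
      intro y hy
      have := htop hy
      simp only [hY, Finset.mem_union, Finset.mem_filter, G.adj_comm b, G.adj_comm x]
      tauto
    have h2 := Finset.card_le_card this
    have h3 := Finset.card_union_le (Y ∪ (T.filter (fun u => G.Adj b u)))
      (T.filter (fun u => G.Adj x u))
    have h4 := Finset.card_union_le Y (T.filter (fun u => G.Adj b u))
    unfold dg
    exact_mod_cast (by omega)
  have hYL : (Y.card : ℝ) ≤ ((Y \ L).card : ℝ) + L.card := by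
    have := Finset.card_le_card_sdiff_add_card (s := Y) (t := L)
    exact_mod_cast this
  have hb' := hdeg b hb
  have hx' := hdeg x hx
  have hYL2 : (T.card : ℝ) / 16 ≤ ((Y \ L).card : ℝ) := by
    have : (0:ℝ) ≤ T.card := by positivity
    linarith
  have hp0 : (0:ℝ) ≤ d * X.card := by positivity
  calc T.card * d / 16 * ((X.card : ℝ) - p * T.card)
      ≤ ((Y \ L).card : ℝ) * (d * X.card) := by
        by_cases hp : 0 ≤ p * T.card
        · have : T.card * d / 16 * ((X.card : ℝ) - p * T.card) ≤ T.card * d / 16 * (X.card : ℝ) := by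
            apply mul_le_mul_of_nonneg_left
            · linarith
            · positivity
          have h5 := mul_le_mul_of_nonneg_right hYL2 hp0
          linarith
        · exfalso
          have h6 := hna ∅ (by simp) (by simp; linarith)
          simp [dg] at h6
          have : (0:ℝ) ≤ T.card := by positivity
          linarith
    _ = ∑ y ∈ Y \ L, d * X.card := by rw [Finset.sum_const, nsmul_eq_mul]
    _ ≤ ∑ y ∈ Y \ L, dg G y X := by
        apply Finset.sum_le_sum
        intro y hy
        obtain ⟨hy1, hy2⟩ := Finset.mem_sdiff.1 hy
        by_contra hcon
        apply hy2
        rw [hL, Finset.mem_filter, Finset.mem_sdiff]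
        have hyt := (Finset.mem_filter.1 hy1).1
        refine ⟨⟨htop hyt, fun hyX => ?_⟩, le_of_not_ge hcon⟩
        exact Finset.disjoint_left.1 hdisj (Finset.mem_filter.1 hyX).1 hyt
    _ ≤ ∑ y ∈ Y, dg G y X := Finset.sum_le_sum_of_subset_of_nonneg Finset.sdiff_subset
        (fun y _ _ => dg_nonneg G y X)

theorem sum_swap {V : Type} (G : SimpleGraph V) (bot top N1 N2 : Finset V) :
    ∑ b ∈ N1, ∑ x ∈ N2, ∑ y ∈ top.filter (fun y => ¬ G.Adj y b ∧ ¬ G.Adj y x),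
      dg G y (bot.filter (fun t => G.Adj t b ∧ G.Adj t x)) =
    ∑ y ∈ top, ∑ t ∈ bot, (if G.Adj y t then (1:ℝ) else 0) *
      (((N1.filter (fun b => G.Adj t b ∧ ¬ G.Adj y b)).card : ℝ) *
       ((N2.filter (fun b => G.Adj t b ∧ ¬ G.Adj y b)).card : ℝ)) := by
  have h1 : ∀ b x, ∑ y ∈ top.filter (fun y => ¬ G.Adj y b ∧ ¬ G.Adj y x),
      dg G y (bot.filter (fun t => G.Adj t b ∧ G.Adj t x)) =
      ∑ y ∈ top, ∑ t ∈ bot, (if G.Adj y t then (1:ℝ) else 0) *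
        ((if G.Adj t b ∧ ¬ G.Adj y b then (1:ℝ) else 0) *
         (if G.Adj t x ∧ ¬ G.Adj y x then (1:ℝ) else 0)) := by
    intro b x
    simp only [dg_eq_sum, Finset.sum_filter]
    apply Finset.sum_congr rfl
    intro y _
    split_ifs with h
    · apply Finset.sum_congr rfl
      intro t _
      by_cases h2 : G.Adj t b <;> by_cases h3 : G.Adj t x <;> simp [h.1, h.2, h2, h3]
    · symm
      apply Finset.sum_eq_zero
      intro t _
      by_cases h2 : G.Adj y b
      · simp [h2]
      · have : G.Adj y x := by tauto
        simp [this]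
  have h2 : ∀ (N : Finset V) (t y : V), ((N.filter (fun b => G.Adj t b ∧ ¬ G.Adj y b)).card : ℝ) =
      ∑ b ∈ N, (if G.Adj t b ∧ ¬ G.Adj y b then (1:ℝ) else 0) := by
    intro N t y
    rw [Finset.card_filter]; push_cast; rfl
  simp only [h1, h2, Finset.sum_mul_sum]
  simp only [Finset.mul_sum]
  rw [Finset.sum_congr rfl (fun b _ => Finset.sum_comm)]
  rw [Finset.sum_comm]
  apply Finset.sum_congr rfl
  intro y _
  rw [Finset.sum_congr rfl (fun b _ => Finset.sum_comm)]
  rw [Finset.sum_comm]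

set_option maxHeartbeats 1000000 in
theorem key {V : Type} (G : SimpleGraph V) (hC : NoC5 G) (T : Finset V) (d p : ℝ) (hd : 0 < d)
    (hd1 : d ≤ 1) (hp : p ≤ d ^ 2 / 8) (hn : 1 ≤ p * T.card)
    (hna : NA G p d T)
    (hdeg : ∀ v ∈ T, dg G v T ≤ T.card / 200)
    (v : V) (hv : v ∈ T) (N1 N2 : Finset V)
    (hN1 : N1 ⊆ T.filter (fun u => G.Adj v u)) (hN2 : N2 ⊆ T.filter (fun u => G.Adj v u))
    (hc1 : p * T.card ≤ N1.card) (hc2 : p * T.card ≤ N2.card) :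
    ∃ A ⊆ N1, ∃ B ⊆ N2, (d ^ 3 / 200) * (N1.card * N2.card) ≤ (A.card * B.card : ℝ) ∧
      ∀ a ∈ A, ∀ b ∈ B, G.Adj a b := by
  have hT0 : (0:ℝ) ≤ T.card := by positivity
  have hTpos : (0:ℝ) < T.card := by
    rcases hT0.lt_or_eq with h | h
    · exact h
    · rw [← h] at hn; norm_num at hn
  have hN1T : N1 ⊆ T := hN1.trans (Finset.filter_subset _ _)
  have hN2T : N2 ⊆ T := hN2.trans (Finset.filter_subset _ _)
  set L1 := (T \ N1).filter (fun b => dg G b N1 ≤ d * N1.card) with hL1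
  set L2 := (T \ N2).filter (fun b => dg G b N2 ≤ d * N2.card) with hL2
  have hl1 : (L1.card : ℝ) < T.card / 50 := hna N1 hN1T hc1
  have hl2 : (L2.card : ℝ) < T.card / 50 := hna N2 hN2T hc2
  set R := T.filter (fun t => t ≠ v ∧ ¬ G.Adj v t ∧ t ∉ L1 ∧ t ∉ L2) with hR
  have hd2 : d ^ 2 ≤ 1 := by nlinarith
  have hpT : p * T.card ≤ T.card / 8 := by nlinarith
  have hRc : (T.card : ℝ) ≤ R.card + 1 + dg G v T + L1.card + L2.card := by
    have : T ⊆ R ∪ {v} ∪ (T.filter (fun u => G.Adj v u)) ∪ L1 ∪ L2 := by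
      intro y hy
      simp only [hR, Finset.mem_union, Finset.mem_filter, Finset.mem_singleton]
      tauto
    have h2 := Finset.card_le_card this
    have h3 := Finset.card_union_le (R ∪ {v} ∪ (T.filter (fun u => G.Adj v u)) ∪ L1) L2
    have h4 := Finset.card_union_le (R ∪ {v} ∪ (T.filter (fun u => G.Adj v u))) L1
    have h5 := Finset.card_union_le (R ∪ {v}) (T.filter (fun u => G.Adj v u))
    have h6 := Finset.card_union_le R {v}
    rw [Finset.card_singleton] at h6
    unfold dg
    exact_mod_cast (by omega)
  have hdv := hdeg v hv
  have hRT : R ⊆ T := Finset.filter_subset _ _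
  obtain ⟨bot, hbR, hbc, hbt⟩ := layer R (fun t => dg G t N1) (R.card / 2) (by omega)
  set top := R \ bot with htop
  have htc : top.card = R.card - R.card / 2 := by
    rw [htop, Finset.card_sdiff_of_subset hbR, hbc]
  have htcr : (T.card : ℝ) / 4 ≤ top.card := by
    have : (R.card : ℝ) ≤ 2 * top.card := by exact_mod_cast (by omega)
    linarith
  have hbcr : (T.card : ℝ) / 4 ≤ bot.card := by
    have : (R.card : ℝ) ≤ 2 * bot.card + 1 := by exact_mod_cast (by omega)
    linarith
  have hdisj : Disjoint bot top := by rw [htop]; exact Finset.disjoint_sdiff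
  have htR : top ⊆ R := Finset.sdiff_subset
  -- degrees of R
  have hR1 : ∀ t ∈ R, d * N1.card ≤ dg G t N1 := by
    intro t ht
    obtain ⟨h1, h2, h3, h4, h5⟩ := Finset.mem_filter.1 ht
    by_contra hcon
    apply h4
    rw [hL1, Finset.mem_filter, Finset.mem_sdiff]
    exact ⟨⟨h1, fun h => h3 (Finset.mem_filter.1 (hN1 h)).2⟩, le_of_not_ge hcon⟩
  have hR2 : ∀ t ∈ R, d * N2.card ≤ dg G t N2 := by
    intro t ht
    obtain ⟨h1, h2, h3, h4, h5⟩ := Finset.mem_filter.1 ht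
    by_contra hcon
    apply h5
    rw [hL2, Finset.mem_filter, Finset.mem_sdiff]
    exact ⟨⟨h1, fun h => h3 (Finset.mem_filter.1 (hN2 h)).2⟩, le_of_not_ge hcon⟩
  have hn1 : (0:ℝ) < N1.card := by linarith
  have hn2 : (0:ℝ) < N2.card := by linarith
  -- it suffices to find a good pair
  by_contra hno
  have hsmall : ∀ y ∈ top, ∀ t ∈ bot, (if G.Adj y t then (1:ℝ) else 0) *
      (((N1.filter (fun b => G.Adj t b ∧ ¬ G.Adj y b)).card : ℝ) *
       ((N2.filter (fun b => G.Adj t b ∧ ¬ G.Adj y b)).card : ℝ)) ≤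
       (d ^ 3 / 200) * (N1.card * N2.card) := by
    intro y hy t ht
    split_ifs with hyt
    swap
    · rw [zero_mul]; positivity
    rw [one_mul]
    have hle : ((N1.filter (fun b => G.Adj t b ∧ ¬ G.Adj y b)).card : ℝ) ≤
        ((N1.filter (fun b => G.Adj y b ∧ ¬ G.Adj t b)).card : ℝ) := by
      have h1 : dg G t N1 ≤ dg G y N1 := hbt t ht y hy
      have e1 : (N1.filter (fun b => G.Adj t b)).card =
          (N1.filter (fun b => G.Adj t b ∧ ¬ G.Adj y b)).card +
          (N1.filter (fun b => G.Adj t b ∧ G.Adj y b)).card := by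
        rw [← Finset.card_filter_add_card_filter_not (s := N1.filter (fun b => G.Adj t b))
          (fun b => G.Adj y b), Finset.filter_filter, Finset.filter_filter, add_comm]
      have e2 : (N1.filter (fun b => G.Adj y b)).card =
          (N1.filter (fun b => G.Adj y b ∧ ¬ G.Adj t b)).card +
          (N1.filter (fun b => G.Adj t b ∧ G.Adj y b)).card := by
        rw [← Finset.card_filter_add_card_filter_not (s := N1.filter (fun b => G.Adj y b))
          (fun b => G.Adj t b), Finset.filter_filter, Finset.filter_filter, add_comm]
        simp only [and_comm]
      unfold dg at h1
      have h1' : (N1.filter (fun b => G.Adj t b)).card ≤ (N1.filter (fun b => G.Adj y b)).card := by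
        exact_mod_cast h1
      exact_mod_cast (by omega)
    refine le_trans (mul_le_mul_of_nonneg_right hle (by positivity)) ?_
    by_contra hcon
    apply hno
    refine ⟨_, Finset.filter_subset _ _, _, Finset.filter_subset _ _, le_of_not_ge hcon, ?_⟩
    intro a ha b hb
    obtain ⟨ha1, ha2, ha3⟩ := Finset.mem_filter.1 ha
    obtain ⟨hb1, hb2, hb3⟩ := Finset.mem_filter.1 hb
    by_contra hab
    have hva := (Finset.mem_filter.1 (hN1 ha1)).2
    have hvb := (Finset.mem_filter.1 (hN2 hb1)).2
    have hvy := (Finset.mem_filter.1 (htR hy)).2.2.1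
    have hvt := (Finset.mem_filter.1 (hbR ht)).2.2.1
    exact hC v a y t b hva ha2.symm hyt hb2 hvb.symm hvy (fun h => ha3 h.symm) hb3
      (fun h => hvt h.symm) (fun h => hab h.symm)
  have hup := Finset.sum_le_sum (fun y hy => Finset.sum_le_sum (fun t ht => hsmall y hy t ht))
  rw [← sum_swap] at hup
  simp only [Finset.sum_const, nsmul_eq_mul] at hup
  have hlow := Finset.sum_le_sum (fun b hb => Finset.sum_le_sum (fun x hx =>
    key_count G T d p hd hna hdeg bot top (hbR.trans hRT) (htR.trans hRT) hdisj htcr b x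
      (hN1T hb) (hN2T hx)))
  have hXs : ∑ b ∈ N1, ∑ x ∈ N2, ((bot.filter (fun t => G.Adj t b ∧ G.Adj t x)).card : ℝ) =
      ∑ t ∈ bot, dg G t N1 * dg G t N2 := by
    simp only [dg_eq_sum, Finset.sum_mul_sum, Finset.card_filter]
    push_cast
    rw [Finset.sum_congr rfl (fun b _ => Finset.sum_comm)]
    rw [Finset.sum_comm]
    apply Finset.sum_congr rfl
    intro t _
    apply Finset.sum_congr rfl
    intro b _
    apply Finset.sum_congr rfl
    intro x _
    by_cases h2 : G.Adj t b <;> by_cases h3 : G.Adj t x <;> simp [h2, h3]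
  have hXl : (T.card : ℝ) / 4 * (d ^ 2 * (N1.card * N2.card)) ≤
      ∑ t ∈ bot, dg G t N1 * dg G t N2 := by
    calc (T.card : ℝ) / 4 * (d ^ 2 * (N1.card * N2.card))
        ≤ bot.card * (d ^ 2 * (N1.card * N2.card)) := by gcongr
      _ = ∑ t ∈ bot, (d * N1.card) * (d * N2.card) := by
          rw [Finset.sum_const, nsmul_eq_mul]; ring
      _ ≤ _ := by
          apply Finset.sum_le_sum
          intro t ht
          exact mul_le_mul (hR1 t (hbR ht)) (hR2 t (hbR ht)) (by positivity) (dg_nonneg _ _ _)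
  have hlow2 : T.card * d / 16 * ((T.card : ℝ) / 4 * (d ^ 2 * (N1.card * N2.card)) -
      N1.card * (N2.card * (p * T.card))) ≤ ∑ b ∈ N1, ∑ x ∈ N2, T.card * d / 16 *
      (((bot.filter (fun t => G.Adj t b ∧ G.Adj t x)).card : ℝ) - p * T.card) := by
    simp only [← Finset.mul_sum, Finset.sum_sub_distrib, Finset.sum_const, nsmul_eq_mul]
    rw [hXs]
    refine mul_le_mul_of_nonneg_left ?_ (by positivity)
    linarith
  have hfin := hlow2.trans (hlow.trans hup)
  have hbT : (bot.card : ℝ) ≤ T.card := by exact_mod_cast Finset.card_le_card (hbR.trans hRT)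
  have htT : (top.card : ℝ) ≤ T.card := by exact_mod_cast Finset.card_le_card (htR.trans hRT)
  have h9 : (top.card : ℝ) * (bot.card * (d ^ 3 / 200 * (N1.card * N2.card))) ≤
      (T.card : ℝ) * (T.card * (d ^ 3 / 200 * (N1.card * N2.card))) := by gcongr
  have hP : 0 < (T.card : ℝ) ^ 2 * N1.card * N2.card := by positivity
  set P := (T.card : ℝ) ^ 2 * N1.card * N2.card with hPdef
  have h10 : d / 16 * (d ^ 2 / 4 - p) * P ≤ d ^ 3 / 200 * P := by
    rw [hPdef]; nlinarith [hfin, h9]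
  have h11 := le_of_mul_le_mul_right h10 hP
  nlinarith [pow_pos hd 3]

/-- neighbours of `v` inside `S` -/
noncomputable def nb {V : Type} (G : SimpleGraph V) (v : V) (S : Finset V) : Finset V :=
  S.filter (fun u => G.Adj v u)

theorem dg_eq {V : Type} (G : SimpleGraph V) (v : V) (S : Finset V) :
    dg G v S = ((nb G v S).card : ℝ) := rfl

theorem mem_nb {V : Type} {G : SimpleGraph V} {v u : V} {S : Finset V} :
    u ∈ nb G v S ↔ u ∈ S ∧ G.Adj v u := Finset.mem_filter

theorem nb_sub {V : Type} {G : SimpleGraph V} {v : V} {S : Finset V} :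
    nb G v S ⊆ S := Finset.filter_subset _ _

theorem overlap_sum {V : Type} (G : SimpleGraph V) (S : Finset V) (b : V) (e : ℝ)
    (hdeg : ∀ v ∈ S, dg G v S ≤ e) :
    ∑ x ∈ S, dg G x (nb G b S) ≤ dg G b S * e := by
  rw [dg_comm, dg_eq, ← nsmul_eq_mul]
  exact Finset.sum_le_card_nsmul _ _ _ (fun x hx => hdeg x (nb_sub hx))

theorem overlap_bad {V : Type} (G : SimpleGraph V) (S : Finset V) (b : V)
    (hdeg : ∀ v ∈ S, dg G v S ≤ S.card / 200) (hb : 0 < dg G b S) :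
    ((S.filter (fun x => dg G b S / 8 < dg G x (nb G b S))).card : ℝ) ≤ S.card / 25 := by
  have h1 := overlap_sum G S b _ hdeg
  have h2 := markov S (fun x => dg G x (nb G b S)) (fun a _ => dg_nonneg _ _ _) (dg G b S / 8)
  have h3 := h2.trans h1
  have : dg G b S * ((S.filter (fun x => dg G b S / 8 < dg G x (nb G b S))).card : ℝ) ≤
    dg G b S * (S.card / 25) := by linarith
  exact le_of_mul_le_mul_left this hb

theorem finishC {V : Type} (G : SimpleGraph V) (hC : NoC5 G) (S : Finset V) (q : ℝ)
    (hE2 : ∀ A ⊆ S, ∀ B ⊆ S, q ≤ A.card → q ≤ B.card → ∃ a ∈ A, ∃ b ∈ B, G.Adj a b)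
    (v u w : V) (hvu : G.Adj v u) (hvw : G.Adj v w) (huw : ¬ G.Adj u w)
    (h1 : dg G w (nb G u S) ≤ dg G u S / 8) (h2 : dg G u S ≤ dg G w S)
    (h3 : dg G u S / 4 ≤ ((nb G u S \ nb G v S).card : ℝ))
    (h4 : dg G w S / 4 ≤ ((nb G w S \ nb G v S).card : ℝ))
    (hq : q ≤ dg G u S / 8) : False := by
  have hov : dg G w (nb G u S) = ((nb G u S ∩ nb G w S).card : ℝ) := by
    unfold dg nb
    congr 2
    ext x; simp only [Finset.mem_filter, Finset.mem_inter]; tauto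
  have hA : ((nb G u S \ nb G v S).card : ℝ) ≤ (((nb G u S \ nb G v S) \ nb G w S).card : ℝ) +
      (nb G u S ∩ nb G w S).card := by
    have : (nb G u S \ nb G v S) ⊆ ((nb G u S \ nb G v S) \ nb G w S) ∪ (nb G u S ∩ nb G w S) := by
      intro x hx
      simp only [Finset.mem_union, Finset.mem_sdiff, Finset.mem_inter] at *
      tauto
    exact_mod_cast (Finset.card_le_card this).trans (Finset.card_union_le _ _)
  have hB : ((nb G w S \ nb G v S).card : ℝ) ≤ (((nb G w S \ nb G v S) \ nb G u S).card : ℝ) +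
      (nb G u S ∩ nb G w S).card := by
    have : (nb G w S \ nb G v S) ⊆ ((nb G w S \ nb G v S) \ nb G u S) ∪ (nb G u S ∩ nb G w S) := by
      intro x hx
      simp only [Finset.mem_union, Finset.mem_sdiff, Finset.mem_inter] at *
      tauto
    exact_mod_cast (Finset.card_le_card this).trans (Finset.card_union_le _ _)
  obtain ⟨t, ht, t', ht', hadj⟩ := hE2 ((nb G u S \ nb G v S) \ nb G w S)
    (Finset.sdiff_subset.trans (Finset.sdiff_subset.trans nb_sub))
    ((nb G w S \ nb G v S) \ nb G u S)
    (Finset.sdiff_subset.trans (Finset.sdiff_subset.trans nb_sub)) (by linarith) (by linarith)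
  simp only [Finset.mem_sdiff, mem_nb] at ht ht'
  obtain ⟨⟨⟨a1, a2⟩, a3⟩, a4⟩ := ht
  obtain ⟨⟨⟨b1, b2⟩, b3⟩, b4⟩ := ht'
  refine hC v u t t' w hvu a2 hadj b2.symm hvw.symm ?_ ?_ ?_ ?_ ?_
  · exact fun h => a3 ⟨a1, h⟩
  · exact fun h => b4 ⟨b1, h⟩
  · exact fun h => a4 ⟨a1, h.symm⟩
  · exact fun h => b3 ⟨b1, h.symm⟩
  · exact fun h => huw h.symm

theorem twoC {V : Type} (G : SimpleGraph V) (S : Finset V) (v u w : V)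
    (h1 : dg G w (nb G u S) ≤ dg G u S / 8) (h2 : dg G u S ≤ dg G w S)
    (h0 : dg G v S ≤ dg G u S) (hpos : 0 < dg G u S) 
    (h3 : ((nb G u S \ nb G v S).card : ℝ) < dg G u S / 4)
    (h4 : ((nb G w S \ nb G v S).card : ℝ) < dg G w S / 4) : False := by
  have hov : dg G w (nb G u S) = ((nb G u S ∩ nb G w S).card : ℝ) := by
    unfold dg nb
    congr 2
    ext x; simp only [Finset.mem_filter, Finset.mem_inter]; tauto
  have e : (((nb G u S) ∪ (nb G w S)).card : ℝ) + (nb G u S ∩ nb G w S).card =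
      (nb G u S).card + (nb G w S).card := by exact_mod_cast Finset.card_union_add_card_inter _ _
  have : (((nb G u S) ∪ (nb G w S)).card : ℝ) ≤ (nb G u S \ nb G v S).card +
    (nb G w S \ nb G v S).card + (nb G v S).card := by
    have : ((nb G u S) ∪ (nb G w S)) ⊆ (nb G u S \ nb G v S) ∪ (nb G w S \ nb G v S) ∪
      (nb G v S) := by
      intro x hx
      simp only [Finset.mem_union, Finset.mem_sdiff] at *
      tauto
    have h5 := (Finset.card_le_card this).trans (Finset.card_union_le _ _)
    have h6 := Finset.card_union_le (nb G u S \ nb G v S) (nb G w S \ nb G v S)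
    exact_mod_cast (by omega)
  rw [hov] at h1
  simp only [dg_eq] at *
  linarith

theorem pick {V : Type} (L B : Finset V) (h : (B.card : ℝ) < L.card) : ∃ x ∈ L, x ∉ B := by
  by_contra hcon
  push Not at hcon
  have : (L.card : ℝ) ≤ B.card := by exact_mod_cast Finset.card_le_card hcon
  linarith

theorem card_un {V : Type} (A B : Finset V) : ((A ∪ B).card : ℝ) ≤ A.card + B.card := by
  exact_mod_cast Finset.card_union_le A B

set_option maxHeartbeats 1000000 in
theorem claimC {V : Type} (G : SimpleGraph V) (hC : NoC5 G) (S : Finset V) (η q : ℝ)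
    (hη : 0 < η) (hη1 : η ≤ 1) (hq1 : 1 ≤ q) (hq : q ≤ η ^ 2 * S.card / 40)
    (hdeg : ∀ v ∈ S, dg G v S ≤ S.card / 200)
    (hE1 : ∀ N ⊆ S, q ≤ N.card → ((S.filter (fun u => dg G u N < η * N.card)).card : ℝ) ≤ q)
    (hE2 : ∀ A ⊆ S, ∀ B ⊆ S, q ≤ A.card → q ≤ B.card → ∃ a ∈ A, ∃ b ∈ B, G.Adj a b) :
    False := by
  have hm0 : (0:ℝ) ≤ S.card := by positivity
  have hη2 : η ^ 2 ≤ η := by nlinarith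
  have hqm : q ≤ η * S.card / 40 := by nlinarith
  have hqm1 : q ≤ S.card / 40 := by nlinarith
  have hm40 : (40:ℝ) ≤ S.card := by linarith
  have hm40' : 40 ≤ S.card := by exact_mod_cast hm40
  obtain ⟨L0, h0S, h0c, h0⟩ := layer S (fun x => dg G x S) (S.card / 4) (by omega)
  have hc1 : (S \ L0).card = S.card - S.card / 4 := by
    rw [Finset.card_sdiff_of_subset h0S, h0c]
  obtain ⟨L1, h1S, h1c, h1⟩ := layer (S \ L0) (fun x => dg G x S) (S.card / 4) (by omega)
  have hc2 : ((S \ L0) \ L1).card = S.card - S.card / 4 - S.card / 4 := by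
    rw [Finset.card_sdiff_of_subset h1S, h1c, hc1]
  obtain ⟨L2, h2S, h2c, h2⟩ := layer ((S \ L0) \ L1) (fun x => dg G x S) (S.card / 4) (by omega)
  have hc3 : (((S \ L0) \ L1) \ L2).card = S.card - S.card / 4 - S.card / 4 - S.card / 4 := by
    rw [Finset.card_sdiff_of_subset h2S, h2c, hc2]
  set L3 := ((S \ L0) \ L1) \ L2 with hL3
  have k0 : (S.card : ℝ) / 5 ≤ L0.card := by
    have : (S.card : ℝ) ≤ 5 * L0.card := by exact_mod_cast (by omega)
    linarith
  have k1 : (S.card : ℝ) / 5 ≤ L1.card := by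
    have : (S.card : ℝ) ≤ 5 * L1.card := by exact_mod_cast (by omega)
    linarith
  have k2 : (S.card : ℝ) / 5 ≤ L2.card := by
    have : (S.card : ℝ) ≤ 5 * L2.card := by exact_mod_cast (by omega)
    linarith
  have k3 : (S.card : ℝ) / 5 ≤ L3.card := by
    have : (S.card : ℝ) ≤ 5 * L3.card := by exact_mod_cast (by omega)
    linarith
  have i1 : L1 ⊆ S := h1S.trans Finset.sdiff_subset
  have i2 : L2 ⊆ S := h2S.trans (Finset.sdiff_subset.trans Finset.sdiff_subset)
  have i3 : L3 ⊆ S := Finset.sdiff_subset.trans (Finset.sdiff_subset.trans Finset.sdiff_subset)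
  -- choose b
  have e0 := hE1 L0 h0S (by linarith)
  obtain ⟨b, hb1, hb2⟩ := pick L1 _ (lt_of_le_of_lt e0 (by linarith))
  have hbS := i1 hb1
  have hb3 : η * L0.card ≤ dg G b L0 := by
    by_contra hcon
    exact hb2 (Finset.mem_filter.2 ⟨hbS, not_le.1 hcon⟩)
  set W1 := nb G b L0 with hW1
  have hW1S : W1 ⊆ S := nb_sub.trans h0S
  have w1 : η * S.card / 5 ≤ W1.card := by
    rw [dg_eq] at hb3
    nlinarith
  have hbd : η * S.card / 5 ≤ dg G b S := by
    have := dg_mono G b h0S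
    rw [dg_eq] at this
    linarith
  have hSpos : 0 < η * S.card := by
    have : (0:ℝ) < S.card := by linarith
    positivity
  have hbpos : 0 < dg G b S := by linarith
  -- choose x
  have e1 := hE1 W1 hW1S (by linarith)
  have ob := overlap_bad G S b hdeg hbpos
  obtain ⟨x, hx1, hx2⟩ := pick L2 ((S.filter (fun u => dg G u W1 < η * W1.card)) ∪ nb G b S ∪
    (S.filter (fun x => dg G b S / 8 < dg G x (nb G b S)))) (by
      have := card_un ((S.filter (fun u => dg G u W1 < η * W1.card)) ∪ nb G b S)
        (S.filter (fun x => dg G b S / 8 < dg G x (nb G b S)))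
      have := card_un (S.filter (fun u => dg G u W1 < η * W1.card)) (nb G b S)
      have := hdeg b hbS
      rw [dg_eq] at this
      linarith)
  have hxS := i2 hx1
  simp only [Finset.mem_union, Finset.mem_filter, mem_nb, not_or, not_and, not_lt] at hx2
  obtain ⟨⟨hx3, hx4⟩, hx5⟩ := hx2
  replace hx3 := hx3 hxS
  replace hx4 := hx4 hxS
  replace hx5 := hx5 hxS
  set W2 := nb G x W1 with hW2
  have hW2S : W2 ⊆ S := nb_sub.trans hW1S
  have w2 : η ^ 2 * S.card / 5 ≤ W2.card := by
    rw [dg_eq] at hx3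
    nlinarith
  have hbx : dg G b S ≤ dg G x S := h1 b hb1 x (h2S hx1)
  have ox := overlap_bad G S x hdeg (by linarith)
  have e2 := hE1 W2 hW2S (by nlinarith)
  obtain ⟨y, hy1, hy2⟩ := pick L3 ((S.filter (fun u => dg G u W2 < η * W2.card)) ∪ nb G b S ∪
    (S.filter (fun x => dg G b S / 8 < dg G x (nb G b S))) ∪ nb G x S ∪
    (S.filter (fun y => dg G x S / 8 < dg G y (nb G x S)))) (by
      have := card_un ((S.filter (fun u => dg G u W2 < η * W2.card)) ∪ nb G b S ∪
        (S.filter (fun x => dg G b S / 8 < dg G x (nb G b S))) ∪ nb G x S)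
        (S.filter (fun y => dg G x S / 8 < dg G y (nb G x S)))
      have := card_un ((S.filter (fun u => dg G u W2 < η * W2.card)) ∪ nb G b S ∪
        (S.filter (fun x => dg G b S / 8 < dg G x (nb G b S)))) (nb G x S)
      have := card_un ((S.filter (fun u => dg G u W2 < η * W2.card)) ∪ nb G b S)
        (S.filter (fun x => dg G b S / 8 < dg G x (nb G b S)))
      have := card_un (S.filter (fun u => dg G u W2 < η * W2.card)) (nb G b S)
      have t1 := hdeg b hbS
      have t2 := hdeg x hxS
      rw [dg_eq] at t1 t2
      linarith)
  have hyS := i3 hy1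
  simp only [Finset.mem_union, Finset.mem_filter, mem_nb, not_or, not_and, not_lt] at hy2
  obtain ⟨⟨⟨⟨hy3, hy4⟩, hy5⟩, hy6⟩, hy7⟩ := hy2
  replace hy3 := hy3 hyS
  replace hy4 := hy4 hyS
  replace hy5 := hy5 hyS
  replace hy6 := hy6 hyS
  replace hy7 := hy7 hyS
  have hxy : dg G x S ≤ dg G y S := h2 x hx1 y hy1
  have hby : dg G b S ≤ dg G y S := hbx.trans hxy
  have hpos : 0 < dg G y W2 := by
    have : 0 < η * W2.card := by
      have : 0 < η ^ 2 * S.card / 5 := by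
        have : (0:ℝ) < S.card := by linarith
        positivity
      have : (0:ℝ) < W2.card := by linarith
      positivity
    linarith
  obtain ⟨v, hv⟩ : (nb G y W2).Nonempty := by
    rw [dg_eq] at hpos
    exact Finset.card_pos.1 (by exact_mod_cast hpos)
  obtain ⟨hvW2, hyv⟩ := mem_nb.1 hv
  obtain ⟨hvW1, hxv⟩ := mem_nb.1 hvW2
  obtain ⟨hvL0, hbv⟩ := mem_nb.1 hvW1
  have hvb : dg G v S ≤ dg G b S := h0 v hvL0 b (h1S hb1)
  have hq8 : q ≤ dg G b S / 8 := by linarith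
  by_cases c1 : dg G b S / 4 ≤ ((nb G b S \ nb G v S).card : ℝ)
  · by_cases c2 : dg G x S / 4 ≤ ((nb G x S \ nb G v S).card : ℝ)
    · exact finishC G hC S q hE2 v b x hbv.symm hxv.symm hx4 hx5 hbx c1 c2 hq8
    · by_cases c3 : dg G y S / 4 ≤ ((nb G y S \ nb G v S).card : ℝ)
      · exact finishC G hC S q hE2 v b y hbv.symm hyv.symm hy4 hy5 hby c1 c3 hq8
      · exact twoC G S v x y hy7 hxy (by linarith) (by linarith) (not_le.1 c2) (not_le.1 c3)
  · by_cases c2 : dg G x S / 4 ≤ ((nb G x S \ nb G v S).card : ℝ)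
    · by_cases c3 : dg G y S / 4 ≤ ((nb G y S \ nb G v S).card : ℝ)
      · exact finishC G hC S q hE2 v x y hxv.symm hyv.symm hy6 hy7 hxy c2 c3 (by linarith)
      · exact twoC G S v b y hy5 hby (by linarith) (by linarith) (not_le.1 c1) (not_le.1 c3)
    · exact twoC G S v b x hx5 hbx (by linarith) (by linarith) (not_le.1 c1) (not_le.1 c2)

/-- the potential structure -/
def Phi {V : Type} (G : SimpleGraph V) (T : Finset V) (s D K : ℝ) : Prop :=
  ∃ U ⊆ T, ∃ W ⊆ T, ∑ u ∈ U, dg G u U ≤ s * U.card + D * (U.card : ℝ) ^ 2 ∧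
    ∑ w ∈ W, dg Gᶜ w W ≤ s * W.card + D * (W.card : ℝ) ^ 2 ∧ K * s ^ 2 ≤ U.card * W.card

theorem Phi.compl {V : Type} {G : SimpleGraph V} {T : Finset V} {s D K : ℝ} (h : Phi G T s D K) :
    Phi Gᶜ T s D K := by
  obtain ⟨U, hU, W, hW, h1, h2, h3⟩ := h
  refine ⟨W, hW, U, hU, h2, ?_, by linarith⟩
  rw [compl_compl]; exact h1

theorem Phi.mono {V : Type} {G : SimpleGraph V} {T T' : Finset V} {s D K : ℝ} (hT : T ⊆ T')
    (h : Phi G T s D K) : Phi G T' s D K := by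
  obtain ⟨U, hU, W, hW, h1, h2, h3⟩ := h
  exact ⟨U, hU.trans hT, W, hW.trans hT, h1, h2, h3⟩

theorem Phi.zero {V : Type} (G : SimpleGraph V) (T : Finset V) (s D : ℝ) : Phi G T s D 0 :=
  ⟨∅, by simp, ∅, by simp, by simp, by simp, by simp⟩

theorem dg_lt {V : Type} (G : SimpleGraph V) (v : V) (X : Finset V) (hv : v ∈ X) :
    dg G v X ≤ X.card - 1 := by
  have : (X.filter (fun u => G.Adj v u)).card < X.card := by
    apply Finset.card_lt_card
    refine ⟨Finset.filter_subset _ _, fun h => ?_⟩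
    exact G.loopless.irrefl v (Finset.mem_filter.1 (h hv)).2
  have h2 : ((X.filter (fun u => G.Adj v u)).card : ℝ) + 1 ≤ X.card := by exact_mod_cast this
  unfold dg
  linarith

theorem Phi.base {V : Type} (G : SimpleGraph V) (T : Finset V) (s D : ℝ) (hs : 0 < s) (hD : 0 ≤ D)
    (hT : s ≤ T.card) : Phi G T s D 1 := by
  obtain ⟨U, hU, hUc⟩ := Finset.exists_subset_card_eq (s := T) (n := ⌈s⌉₊) (Nat.ceil_le.2 hT)
  have h1 : s ≤ U.card := by rw [hUc]; exact Nat.le_ceil s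
  have h2 : (U.card : ℝ) - 1 ≤ s := by
    rw [hUc]; linarith [Nat.ceil_lt_add_one hs.le]
  have h3 : ∀ H : SimpleGraph V, ∑ u ∈ U, dg H u U ≤ s * U.card + D * (U.card : ℝ) ^ 2 := by
    intro H
    have := Finset.sum_le_card_nsmul U (fun u => dg H u U) s
      (fun u hu => (dg_lt H u U hu).trans h2)
    rw [nsmul_eq_mul] at this
    have : 0 ≤ D * (U.card : ℝ) ^ 2 := by positivity
    linarith
  exact ⟨U, hU, U, hU, h3 G, h3 Gᶜ, by nlinarith⟩

/-- every vertex of `B` has few neighbours in `A` -/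
def SP {V : Type} (G : SimpleGraph V) (d : ℝ) (A B : Finset V) : Prop :=
  ∀ b ∈ B, dg G b A ≤ d * A.card

theorem half_good {V : Type} (G : SimpleGraph V) (d : ℝ) (hd : 0 < d) (A U : Finset V)
    (h : SP G d A U) :
    (A.card : ℝ) / 2 ≤ (A.filter (fun a => dg G a U ≤ 2 * d * U.card)).card := by
  have e : (A.card : ℝ) = (A.filter (fun a => dg G a U ≤ 2 * d * U.card)).card +
      (A.filter (fun a => 2 * d * U.card < dg G a U)).card := by
    have := Finset.card_filter_add_card_filter_not (s := A) (fun a => dg G a U ≤ 2 * d * U.card)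
    simp only [not_le] at this
    exact_mod_cast this.symm
  by_cases hU : U.card = 0
  · have : A.filter (fun a => 2 * d * U.card < dg G a U) = ∅ := by
      apply Finset.filter_false_of_mem
      intro a _
      have := dg_le G a U
      rw [hU] at *
      simpa using this
    rw [this] at e
    simp only [Finset.card_empty, Nat.cast_zero] at e
    have : (0:ℝ) ≤ A.card := by positivity
    linarith
  have hU0 : (0:ℝ) < U.card := by positivity
  have h1 := markov A (fun a => dg G a U) (fun a _ => dg_nonneg _ _ _) (2 * d * U.card)
  rw [dg_comm] at h1
  have h2 := Finset.sum_le_card_nsmul U (fun u => dg G u A) _ h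
  rw [nsmul_eq_mul] at h2
  have h3 := h1.trans h2
  have : (d * U.card) * (2 * ((A.filter (fun a => 2 * d * U.card < dg G a U)).card : ℝ)) ≤
    (d * U.card) * A.card := by linarith
  have := le_of_mul_le_mul_left this (by positivity)
  linarith

theorem dg_union {V : Type} (G : SimpleGraph V) (v : V) (A B : Finset V) (h : Disjoint A B) :
    dg G v (A ∪ B) = dg G v A + dg G v B := by
  simp only [dg_eq_sum]
  exact Finset.sum_union h

theorem mergeG {V : Type} (G : SimpleGraph V) (T A B : Finset V) (d s α β : ℝ) (hd : 0 < d)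
    (hA : A ⊆ T) (hB : B ⊆ T) (hAB : Disjoint A B)
    (h : SP G d A B) (hPB : Phi G B s (2 * d) β)
    (hPA : ∀ A' ⊆ A, (A.card : ℝ) / 2 ≤ A'.card → Phi G A' s (2 * d) α) :
    Phi G T s (2 * d) (α + β) := by
  obtain ⟨U, hU, W, hW, h1, h2, h3⟩ := hPB
  obtain ⟨U', hU', W', hW', h1', h2', h3'⟩ := hPA _ (Finset.filter_subset _ _)
    (half_good G d hd A U (fun b hb => h b (hU hb)))
  have hUA : U' ⊆ A := hU'.trans (Finset.filter_subset _ _)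
  have hWA : W' ⊆ A := hW'.trans (Finset.filter_subset _ _)
  have hdis : Disjoint U' U := Finset.disjoint_of_subset_left hUA
    (Finset.disjoint_of_subset_right hU hAB)
  have hcr : ∑ a ∈ U', dg G a U ≤ U'.card * (2 * d * U.card) := by
    rw [← nsmul_eq_mul]
    exact Finset.sum_le_card_nsmul _ _ _ (fun a ha => (Finset.mem_filter.1 (hU' ha)).2)
  have hcu : ((U' ∪ U).card : ℝ) = U'.card + U.card := by
    exact_mod_cast Finset.card_union_of_disjoint hdis
  have hsum : ∑ u ∈ U' ∪ U, dg G u (U' ∪ U) ≤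
      s * (U' ∪ U).card + 2 * d * ((U' ∪ U).card : ℝ) ^ 2 := by
    rw [Finset.sum_union hdis, hcu]
    simp only [dg_union G _ _ _ hdis, Finset.sum_add_distrib]
    rw [dg_comm G U U']
    nlinarith
  have c0 : (0:ℝ) ≤ U.card := by positivity
  have c1 : (0:ℝ) ≤ U'.card := by positivity
  rcases le_total (W.card : ℝ) W'.card with hw | hw
  · refine ⟨U' ∪ U, Finset.union_subset (hUA.trans hA) (hU.trans hB), W', hWA.trans hA, hsum, h2', ?_⟩
    rw [hcu]; nlinarith
  · refine ⟨U' ∪ U, Finset.union_subset (hUA.trans hA) (hU.trans hB), W, hW.trans hB, hsum, h2, ?_⟩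
    rw [hcu]; nlinarith

theorem merge {V : Type} (G : SimpleGraph V) (T A B : Finset V) (d s α β : ℝ) (hd : 0 < d)
    (hA : A ⊆ T) (hB : B ⊆ T) (hAB : Disjoint A B)
    (h : SP G d A B ∨ SP Gᶜ d A B) (hPB : Phi G B s (2 * d) β)
    (hPA : ∀ A' ⊆ A, (A.card : ℝ) / 2 ≤ A'.card → Phi G A' s (2 * d) α) :
    Phi G T s (2 * d) (α + β) := by
  rcases h with h | h
  · exact mergeG G T A B d s α β hd hA hB hAB h hPB hPA
  · have := mergeG Gᶜ T A B d s α β hd hA hB hAB h hPB.compl (fun A' h1 h2 => (hPA A' h1 h2).compl)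
    have := this.compl
    rwa [compl_compl] at this

theorem extractG {V : Type} (G : SimpleGraph V) (U : Finset V) (d s : ℝ) (hd : 0 < d)
    (hs : 0 < s) (hU : s / d ≤ U.card)
    (h : ∑ u ∈ U, dg G u U ≤ s * U.card + 2 * d * (U.card : ℝ) ^ 2) :
    ∃ X ⊆ U, s / (2 * d) ≤ X.card ∧ ∀ v ∈ X, dg G v X ≤ 12 * d * X.card := by
  have hpos : (0:ℝ) < U.card := lt_of_lt_of_le (by positivity) hU
  have hsd : s ≤ d * U.card := by
    rw [div_le_iff₀ hd] at hU; linarith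
  have h1 := markov U (fun a => dg G a U) (fun a _ => dg_nonneg _ _ _) (6 * d * U.card)
  have e : (U.card : ℝ) = (U.filter (fun a => dg G a U ≤ 6 * d * U.card)).card +
      (U.filter (fun a => 6 * d * U.card < dg G a U)).card := by
    have := Finset.card_filter_add_card_filter_not (s := U) (fun a => dg G a U ≤ 6 * d * U.card)
    simp only [not_le] at this
    exact_mod_cast this.symm
  have h2 : (6 * d * U.card) * ((U.filter (fun a => 6 * d * U.card < dg G a U)).card : ℝ) ≤
    (6 * d * U.card) * (U.card / 2) := by nlinarith
  have h6 : 0 < 6 * d * U.card := mul_pos (by linarith) hpos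
  have h3 := le_of_mul_le_mul_left h2 h6
  have hX : (U.card : ℝ) / 2 ≤ (U.filter (fun a => dg G a U ≤ 6 * d * U.card)).card := by linarith
  refine ⟨U.filter (fun a => dg G a U ≤ 6 * d * U.card), Finset.filter_subset _ _, ?_, ?_⟩
  · refine le_trans ?_ hX
    have : s / (2 * d) = s / d / 2 := by field_simp
    linarith
  · intro v hv
    have := (Finset.mem_filter.1 hv).2
    refine (dg_mono G v (Finset.filter_subset _ _)).trans (this.trans ?_)
    nlinarith

theorem extract {V : Type} (G : SimpleGraph V) (T : Finset V) (d s K : ℝ) (hd : 0 < d)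
    (hs : 0 < s) (hK : 1 / d ^ 2 ≤ K) (h : Phi G T s (2 * d) K) :
    ∃ X ⊆ T, s / (2 * d) ≤ X.card ∧ ((∀ v ∈ X, dg G v X ≤ 12 * d * X.card) ∨
      (∀ v ∈ X, dg Gᶜ v X ≤ 12 * d * X.card)) := by
  obtain ⟨U, hU, W, hW, h1, h2, h3⟩ := h
  have h4 : (s / d) * (s / d) ≤ U.card * W.card := by
    refine le_trans ?_ h3
    have : (s / d) * (s / d) = 1 / d ^ 2 * s ^ 2 := by field_simp
    rw [this]
    gcongr
  by_cases c : s / d ≤ U.card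
  · obtain ⟨X, hX, hc, hx⟩ := extractG G U d s hd hs c h1
    exact ⟨X, hX.trans hU, hc, Or.inl hx⟩
  · have c' : s / d ≤ W.card := by
      by_contra hcon
      push Not at c hcon
      have : (U.card : ℝ) * W.card < (s / d) * (s / d) :=
        mul_lt_mul'' c hcon (by positivity) (by positivity)
      linarith
    obtain ⟨X, hX, hc, hx⟩ := extractG Gᶜ W d s hd hs c' h2
    exact ⟨X, hX.trans hW, hc, Or.inr hx⟩

/-- constant-density pair lemma gives a constant Rodl theorem -/
theorem tree {V : Type} (G : SimpleGraph V) (d p s : ℝ) (hd : 0 < d) (hp : 0 < p) (hp1 : p ≤ 1)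
    (hs : 1 ≤ s)
    (hpair : ∀ T : Finset V, 2 ≤ T.card → ∃ A ⊆ T, ∃ B ⊆ T, Disjoint A B ∧ p * T.card ≤ A.card ∧
      p * T.card ≤ B.card ∧ (SP G d A B ∨ SP Gᶜ d A B)) (t : ℕ) :
    ∀ T : Finset V, s * (2 / p) ^ t ≤ T.card → Phi G T s (2 * d) (2 ^ t) := by
  have h2p : 2 ≤ 2 / p := by rw [le_div_iff₀ hp]; linarith
  induction t with
  | zero =>
    intro T hT
    simp only [pow_zero, mul_one] at *
    exact Phi.base G T s (2 * d) (by linarith) (by linarith) hT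
  | succ t ih =>
    intro T hT
    have hge : (1:ℝ) ≤ (2 / p) ^ t := one_le_pow₀ (by linarith)
    have hT2 : (2:ℝ) ≤ T.card := by
      refine le_trans ?_ hT
      rw [pow_succ]
      calc (2:ℝ) = 1 * (1 * 2) := by norm_num
        _ ≤ _ := by gcongr
    have hT3 : 2 * (s * (2 / p) ^ t) ≤ p * T.card := by
      have : p * (s * (2 / p) ^ (t + 1)) ≤ p * T.card := by gcongr
      have e : p * (s * (2 / p) ^ (t + 1)) = 2 * (s * (2 / p) ^ t) := by
        rw [pow_succ]; field_simp
      linarith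
    obtain ⟨A, hA, B, hB, hAB, hcA, hcB, h⟩ := hpair T (by exact_mod_cast hT2)
    have hpos : 0 ≤ s * (2 / p) ^ t := by positivity
    rw [pow_succ, mul_two]
    exact merge G T A B d s _ _ hd hA hB hAB h (ih B (by linarith))
      (fun A' _ h2 => ih A' (by linarith))

theorem parts {V : Type} (k m : ℕ) : ∀ T : Finset V, m * k ≤ T.card →
    ∃ P : ℕ → Finset V, (∀ i < m, P i ⊆ T ∧ (P i).card = k) ∧
      ∀ i < m, ∀ j < m, i ≠ j → Disjoint (P i) (P j) := by
  induction m with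
  | zero => intro T _; exact ⟨fun _ => ∅, by simp, by simp⟩
  | succ m ih =>
    intro T hT
    have hk : k ≤ T.card := by nlinarith
    obtain ⟨W, hW, hWc⟩ := Finset.exists_subset_card_eq hk
    obtain ⟨P, hP1, hP2⟩ := ih (T \ W) (by
      rw [Finset.card_sdiff_of_subset hW, hWc]
      have : (m + 1) * k = m * k + k := by ring
      omega)
    refine ⟨fun i => if i = m then W else P i, ?_, ?_⟩
    · intro i hi
      by_cases h : i = m
      · simp [h, hW, hWc]
      · have := hP1 i (by omega)
        simp only [h, if_false]
        exact ⟨this.1.trans Finset.sdiff_subset, this.2⟩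
    · intro i hi j hj hij
      by_cases h : i = m
      · have h' : j ≠ m := by omega
        have := (hP1 j (by omega)).1
        simp only [h, h', if_true, if_false]
        exact Finset.disjoint_of_subset_right this Finset.disjoint_sdiff
      · by_cases h' : j = m
        · have := (hP1 i (by omega)).1
          simp only [h, h', if_true, if_false]
          exact Finset.disjoint_of_subset_left this Finset.sdiff_disjoint
        · simp only [h, h', if_false]
          exact hP2 i (by omega) j (by omega) hij

theorem low_small {V : Type} (H : SimpleGraph V) (T : Finset V) (e q : ℝ)
    (hno : ∀ A ⊆ T, ∀ B ⊆ T, Disjoint A B → q ≤ A.card → q ≤ B.card → ¬ SP H e A B)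
    (A B : Finset V) (hA : A ⊆ T) (hB : B ⊆ T) (hAB : Disjoint A B) (hq : q ≤ A.card) :
    ((B.filter (fun b => dg H b A ≤ e * A.card)).card : ℝ) < q := by
  by_contra hcon
  push Not at hcon
  exact hno A hA _ ((Finset.filter_subset _ _).trans hB)
    (Finset.disjoint_of_subset_right (Finset.filter_subset _ _) hAB) hq hcon
    (fun b hb => (Finset.mem_filter.1 hb).2)

theorem not_low {V : Type} {H : SimpleGraph V} {A B : Finset V} {e : ℝ} {b : V} (hb : b ∈ B)
    (h : b ∉ B.filter (fun b => dg H b A ≤ e * A.card)) : e * A.card ≤ (nb H b A).card := by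
  by_contra hcon
  exact h (Finset.mem_filter.2 ⟨hb, le_of_not_ge hcon⟩)

set_option maxHeartbeats 1000000 in
theorem pair_big {V : Type} (G : SimpleGraph V) (hC : NoC5 G) (e : ℝ) (he : 0 < e)
    (he1 : e ≤ 1) (T : Finset V) (hT : 10 ≤ T.card)
    (hno : ∀ A ⊆ T, ∀ B ⊆ T, Disjoint A B → e ^ 3 / 100 * T.card ≤ A.card →
      e ^ 3 / 100 * T.card ≤ B.card → ¬ SP G e A B)
    (hno' : ∀ A ⊆ T, ∀ B ⊆ T, Disjoint A B → e ^ 3 / 100 * T.card ≤ A.card →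
      e ^ 3 / 100 * T.card ≤ B.card → ¬ SP Gᶜ e A B) : False := by
  obtain ⟨P, hP, hPd⟩ := parts (T.card / 5) 5 T (by omega)
  set q := e ^ 3 / 100 * T.card with hq
  have hn : (10:ℝ) ≤ T.card := by exact_mod_cast hT
  have hk : (T.card : ℝ) / 10 ≤ ((T.card / 5 : ℕ) : ℝ) := by
    have : (T.card : ℝ) ≤ 10 * ((T.card / 5 : ℕ) : ℝ) := by exact_mod_cast (by omega)
    linarith
  have hc : ∀ i < 5, (T.card : ℝ) / 10 ≤ (P i).card := by
    intro i hi; rw [(hP i hi).2]; exact hk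
  have hS : ∀ i < 5, P i ⊆ T := fun i hi => (hP i hi).1
  have e2 : e ^ 2 ≤ e := by nlinarith
  have e3 : e ^ 3 ≤ e ^ 2 := by nlinarith [sq_nonneg e]
  have e20 : 0 < e ^ 2 := by positivity
  have q0 : 0 < q := by positivity
  have q2 : q ≤ e ^ 2 * T.card / 100 := by rw [hq]; nlinarith
  have q1 : q ≤ e * T.card / 100 := by nlinarith
  have q3 : q ≤ T.card / 100 := by nlinarith
  have L := fun A B hA hB hAB hq => low_small G T e q hno A B hA hB hAB hq
  have L' := fun A B hA hB hAB hq => low_small Gᶜ T e q hno' A B hA hB hAB hq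
  have c0 := hc 0 (by norm_num)
  have c1 := hc 1 (by norm_num)
  have c2 := hc 2 (by norm_num)
  have c3 := hc 3 (by norm_num)
  have c4 := hc 4 (by norm_num)
  have s0 := hS 0 (by norm_num)
  have s1 := hS 1 (by norm_num)
  have s2 := hS 2 (by norm_num)
  have s3 := hS 3 (by norm_num)
  have s4 := hS 4 (by norm_num)
  have a1 := L (P 1) (P 0) s1 s0 (hPd 1 (by norm_num) 0 (by norm_num) (by norm_num)) (by linarith)
  have a2 := L (P 2) (P 0) s2 s0 (hPd 2 (by norm_num) 0 (by norm_num) (by norm_num)) (by linarith)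
  have a3 := L' (P 3) (P 0) s3 s0 (hPd 3 (by norm_num) 0 (by norm_num) (by norm_num)) (by linarith)
  have a4 := L' (P 4) (P 0) s4 s0 (hPd 4 (by norm_num) 0 (by norm_num) (by norm_num)) (by linarith)
  obtain ⟨v, hv, hv'⟩ := pick (P 0) (_ ∪ _ ∪ _ ∪ _)
    (lt_of_le_of_lt ((card_un _ _).trans (add_le_add ((card_un _ _).trans (add_le_add
      ((card_un _ _).trans (add_le_add a1.le a2.le)) a3.le)) a4.le)) (by linarith))
  simp only [Finset.mem_union, not_or] at hv'
  obtain ⟨⟨⟨b1, b2⟩, b3⟩, b4⟩ := hv'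
  replace b1 := not_low hv b1
  replace b2 := not_low hv b2
  replace b3 := not_low hv b3
  replace b4 := not_low hv b4
  have hB1 : e * T.card / 10 ≤ (nb G v (P 1)).card := by nlinarith
  have hB2 : e * T.card / 10 ≤ (nb G v (P 2)).card := by nlinarith
  have hB3 : e * T.card / 10 ≤ (nb Gᶜ v (P 3)).card := by nlinarith
  have hB4 : e * T.card / 10 ≤ (nb Gᶜ v (P 4)).card := by nlinarith
  clear a1 a2 a3 a4 b1 b2 b3 b4
  have dd : ∀ i < 5, ∀ j < 5, i ≠ j → ∀ A ⊆ P i, ∀ B ⊆ P j, Disjoint A B := by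
    intro i hi j hj hij A hA B hB
    exact Finset.disjoint_of_subset_left hA (Finset.disjoint_of_subset_right hB (hPd i hi j hj hij))
  have i1 : nb G v (P 1) ⊆ P 1 := nb_sub
  have i2 : nb G v (P 2) ⊆ P 2 := nb_sub
  have i3 : nb Gᶜ v (P 3) ⊆ P 3 := nb_sub
  have i4 : nb Gᶜ v (P 4) ⊆ P 4 := nb_sub
  have a2 := L' (nb G v (P 2)) (nb G v (P 1)) (i2.trans s2) (i1.trans s1)
    (dd 2 (by norm_num) 1 (by norm_num) (by norm_num) _ i2 _ i1) (by linarith)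
  have a3 := L (nb Gᶜ v (P 3)) (nb G v (P 1)) (i3.trans s3) (i1.trans s1)
    (dd 3 (by norm_num) 1 (by norm_num) (by norm_num) _ i3 _ i1) (by linarith)
  have a4 := L' (nb Gᶜ v (P 4)) (nb G v (P 1)) (i4.trans s4) (i1.trans s1)
    (dd 4 (by norm_num) 1 (by norm_num) (by norm_num) _ i4 _ i1) (by linarith)
  obtain ⟨b, hb, hb'⟩ := pick (nb G v (P 1)) (_ ∪ _ ∪ _)
    (lt_of_le_of_lt ((card_un _ _).trans (add_le_add ((card_un _ _).trans (add_le_add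
      a2.le a3.le)) a4.le)) (by linarith))
  simp only [Finset.mem_union, not_or] at hb'
  obtain ⟨⟨b2, b3⟩, b4⟩ := hb'
  replace b2 := not_low hb b2
  replace b3 := not_low hb b3
  replace b4 := not_low hb b4
  have hC2 : e ^ 2 * T.card / 10 ≤ (nb Gᶜ b (nb G v (P 2))).card := by nlinarith
  have hC3 : e ^ 2 * T.card / 10 ≤ (nb G b (nb Gᶜ v (P 3))).card := by nlinarith
  have hC4 : e ^ 2 * T.card / 10 ≤ (nb Gᶜ b (nb Gᶜ v (P 4))).card := by nlinarith
  clear a2 a3 a4 b2 b3 b4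
  have j2 : nb Gᶜ b (nb G v (P 2)) ⊆ P 2 := nb_sub.trans i2
  have j3 : nb G b (nb Gᶜ v (P 3)) ⊆ P 3 := nb_sub.trans i3
  have j4 : nb Gᶜ b (nb Gᶜ v (P 4)) ⊆ P 4 := nb_sub.trans i4
  have hpos : 0 < e ^ 2 * T.card := by positivity
  have a2 := L' _ _ (j2.trans s2) (j3.trans s3)
    (dd 2 (by norm_num) 3 (by norm_num) (by norm_num) _ j2 _ j3) (by linarith)
  have a4 := L _ _ (j4.trans s4) (j3.trans s3)
    (dd 4 (by norm_num) 3 (by norm_num) (by norm_num) _ j4 _ j3) (by linarith)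
  obtain ⟨t, ht, ht'⟩ := pick (nb G b (nb Gᶜ v (P 3))) (_ ∪ _)
    (lt_of_le_of_lt ((card_un _ _).trans (add_le_add a2.le a4.le)) (by linarith))
  simp only [Finset.mem_union, not_or] at ht'
  obtain ⟨b2, b4⟩ := ht'
  replace b2 := not_low ht b2
  replace b4 := not_low ht b4
  have hD2 : 10 * q ≤ (nb Gᶜ t (nb Gᶜ b (nb G v (P 2)))).card := by rw [hq]; nlinarith
  have hD4 : 10 * q ≤ (nb G t (nb Gᶜ b (nb Gᶜ v (P 4)))).card := by rw [hq]; nlinarith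
  clear a2 a4 b2 b4
  have k2 : nb Gᶜ t (nb Gᶜ b (nb G v (P 2))) ⊆ P 2 := nb_sub.trans j2
  have k4 : nb G t (nb Gᶜ b (nb Gᶜ v (P 4))) ⊆ P 4 := nb_sub.trans j4
  have a2 := L _ _ (k2.trans s2) (k4.trans s4)
    (dd 2 (by norm_num) 4 (by norm_num) (by norm_num) _ k2 _ k4) (by linarith)
  obtain ⟨t', ht', b2⟩ := pick (nb G t (nb Gᶜ b (nb Gᶜ v (P 4)))) _ (lt_of_lt_of_le a2 (by linarith))
  replace b2 := not_low ht' b2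
  have hpos2 : (0:ℝ) < (nb G t' (nb Gᶜ t (nb Gᶜ b (nb G v (P 2))))).card := by
    refine lt_of_lt_of_le ?_ b2
    have : (0:ℝ) < (nb Gᶜ t (nb Gᶜ b (nb G v (P 2)))).card := by linarith
    positivity
  obtain ⟨x, hx⟩ := Finset.card_pos.1 (by exact_mod_cast hpos2)
  simp only [mem_nb, compl_adj] at hx ht' ht hb
  obtain ⟨⟨⟨⟨x1, x2⟩, x3, x4⟩, x5, x6⟩, x7⟩ := hx
  obtain ⟨⟨⟨y1, y2, y3⟩, y4, y5⟩, y6⟩ := ht'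
  obtain ⟨⟨z1, z2, z3⟩, z4⟩ := ht
  exact hC v b t t' x hb.2 z4 y6 x7 x2.symm z3 y5 x6 (fun h => y3 h.symm) (fun h => x4 h.symm)

theorem pairC {V : Type} (G : SimpleGraph V) (hC : NoC5 G) (e : ℝ) (he : 0 < e)
    (he1 : e ≤ 1) (T : Finset V) (hT : 2 ≤ T.card) :
    ∃ A ⊆ T, ∃ B ⊆ T, Disjoint A B ∧ e ^ 3 / 100 * T.card ≤ A.card ∧
      e ^ 3 / 100 * T.card ≤ B.card ∧ (SP G e A B ∨ SP Gᶜ e A B) := by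
  by_contra hcon
  push Not at hcon
  have e3 : e ^ 3 ≤ 1 := pow_le_one₀ he.le he1
  by_cases h : 10 ≤ T.card
  · exact pair_big G hC e he he1 T h (fun A hA B hB h1 h2 h3 => (hcon A hA B hB h1 h2 h3).1)
      (fun A hA B hB h1 h2 h3 => (hcon A hA B hB h1 h2 h3).2)
  · have h10 : (T.card : ℝ) ≤ 10 := by exact_mod_cast (by omega)
    have h0 : (0:ℝ) ≤ T.card := by positivity
    obtain ⟨a, ha, b, hb, hab⟩ := Finset.one_lt_card.1 hT
    have := hcon {a} (by simpa using ha) {b} (by simpa using hb) (by simpa using hab)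
      (by simp; nlinarith) (by simp; nlinarith)
    by_cases hadj : G.Adj b a
    · apply this.2
      intro c hc
      rw [Finset.mem_singleton] at hc
      subst hc
      simp [dg, Finset.filter_singleton, hadj, he.le]
    · apply this.1
      intro c hc
      rw [Finset.mem_singleton] at hc
      subst hc
      simp [dg, Finset.filter_singleton, hadj, he.le]

/-- weak Rodl theorem for a constant -/
theorem rodl_const : ∃ ρ : ℝ, 0 < ρ ∧ ρ ≤ 1 ∧ ∀ (V : Type) (G : SimpleGraph V), NoC5 G →
    ∀ T : Finset V, ∃ X ⊆ T, ρ * T.card ≤ X.card ∧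
      ((∀ v ∈ X, dg G v X ≤ X.card / 200) ∨ (∀ v ∈ X, dg Gᶜ v X ≤ X.card / 200)) := by
  set e : ℝ := 1 / 2400 with he
  set p : ℝ := e ^ 3 / 100 with hp
  have hp0 : 0 < p := by rw [hp, he]; norm_num
  have hp1 : p ≤ 1 := by rw [hp, he]; norm_num
  have h2p : 1 ≤ 2 / p := by rw [le_div_iff₀ hp0]; linarith
  have hQ : (1:ℝ) ≤ (2 / p) ^ 24 := one_le_pow₀ h2p
  refine ⟨1 / (2 / p) ^ 24, by positivity, ?_, ?_⟩
  · rw [div_le_one (by positivity)]; exact hQ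
  intro V G hC T
  by_cases hs : 1 ≤ T.card / (2 / p) ^ 24
  · have hP := tree G e p (T.card / (2 / p) ^ 24) (by norm_num) hp0 hp1 hs
      (fun T' hT' => pairC G hC e (by norm_num) (by norm_num) T' hT') 24 T
      (by rw [div_mul_cancel₀]; positivity)
    obtain ⟨X, hX, hc, hx⟩ := extract G T e _ _ (by norm_num) (by linarith)
      (by rw [he]; norm_num) hP
    refine ⟨X, hX, ?_, ?_⟩
    · refine le_trans ?_ hc
      rw [le_div_iff₀ (by norm_num)]
      have : 1 / (2 / p) ^ 24 * (T.card : ℝ) = T.card / (2 / p) ^ 24 := by ring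
      rw [this]
      have : 0 ≤ (T.card : ℝ) / (2 / p) ^ 24 := by linarith
      rw [he]; linarith
    · have : ∀ x : ℝ, 12 * e * x = x / 200 := by intro x; rw [he]; ring
      simp only [this] at hx
      exact hx
  · push Not at hs
    rcases T.eq_empty_or_nonempty with h | ⟨v, hv⟩
    · subst h
      exact ⟨∅, by simp, by simp, by simp⟩
    · refine ⟨{v}, by simpa using hv, ?_, Or.inl ?_⟩
      · have : 1 / (2 / p) ^ 24 * (T.card : ℝ) = T.card / (2 / p) ^ 24 := by ring
        rw [this]; simp; linarith
      · intro u hu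
        rw [Finset.mem_singleton] at hu
        subst hu
        simp [dg, Finset.filter_singleton]

/-- `T` has an asymmetric sparse or dense pair -/
def Asym {V : Type} (G : SimpleGraph V) (p κ d : ℝ) (T : Finset V) : Prop :=
  ∃ A ⊆ T, ∃ B ⊆ T, Disjoint A B ∧ p * T.card ≤ A.card ∧ κ * T.card ≤ B.card ∧
    (SP G d A B ∨ SP Gᶜ d A B)

theorem Asym.compl {V : Type} {G : SimpleGraph V} {p κ d : ℝ} {T : Finset V}
    (h : Asym G p κ d T) : Asym Gᶜ p κ d T := by
  obtain ⟨A, hA, B, hB, h1, h2, h3, h4⟩ := h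
  refine ⟨A, hA, B, hB, h1, h2, h3, ?_⟩
  rw [compl_compl]; exact h4.symm

theorem Asym.mono {V : Type} {G : SimpleGraph V} {p p' κ d : ℝ} {T : Finset V} (hp : p' ≤ p)
    (h : Asym G p κ d T) : Asym G p' κ d T := by
  obtain ⟨A, hA, B, hB, h1, h2, h3, h4⟩ := h
  refine ⟨A, hA, B, hB, h1, le_trans ?_ h2, h3, h4⟩
  gcongr

theorem step0 {V : Type} (G : SimpleGraph V) (p d : ℝ) (hd : 0 < d) (hp : p ≤ 1 / 4)
    (T : Finset V) (hT : 2 ≤ T.card) (h : NA G p d T) : ∃ v ∈ T, d * T.card / 4 ≤ dg G v T := by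
  obtain ⟨A, hA, hAc⟩ := Finset.exists_subset_card_eq (s := T) (n := T.card / 2) (by omega)
  have hT0 : (2:ℝ) ≤ T.card := by exact_mod_cast hT
  have h1 : (T.card : ℝ) ≤ 4 * A.card := by exact_mod_cast (by omega)
  have h2 : (T.card : ℝ) ≤ 2 * (T \ A).card := by
    rw [Finset.card_sdiff_of_subset hA, hAc]
    exact_mod_cast (by omega)
  have h3 := h A hA (by nlinarith)
  obtain ⟨v, hv, hv'⟩ := pick (T \ A) _ (h3.trans (by linarith))
  have hvT := (Finset.mem_sdiff.1 hv).1
  refine ⟨v, hvT, ?_⟩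
  by_contra hcon
  apply hv'
  refine Finset.mem_filter.2 ⟨hv, ?_⟩
  have := dg_mono G v hA
  nlinarith

theorem na_of_not_asym {V : Type} (G : SimpleGraph V) (p p0 κ d ρ : ℝ) (hp0 : 0 ≤ p)
    (hp : p0 = ρ * p) (hκ : κ ≤ ρ / 50) (T' T : Finset V) (hT : T ⊆ T')
    (hc : ρ * T'.card ≤ T.card) (h : ¬ Asym G p0 κ d T') : NA G p d T := by
  intro A hA hpA
  by_contra hcon
  push Not at hcon
  apply h
  refine ⟨A, hA.trans hT, (T \ A).filter (fun b => dg G b A ≤ d * A.card),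
    (Finset.filter_subset _ _).trans (Finset.sdiff_subset.trans hT),
    Finset.disjoint_of_subset_right (Finset.filter_subset _ _) Finset.disjoint_sdiff, ?_, ?_,
    Or.inl fun b hb => (Finset.mem_filter.1 hb).2⟩
  · refine le_trans ?_ hpA
    rw [hp]
    nlinarith
  · refine le_trans ?_ hcon
    have : (0:ℝ) ≤ T'.card := by positivity
    nlinarith

theorem asym_big {V : Type} (G : SimpleGraph V) (p κ d : ℝ) (hd : 0 ≤ d) (hκ : κ ≤ 1 / 50)
    (T : Finset V) (hT : 2 ≤ T.card) (h : ¬ Asym G p κ d T) : 1 ≤ p * T.card := by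
  by_contra hcon
  push Not at hcon
  have hT0 : (2:ℝ) ≤ T.card := by exact_mod_cast hT
  obtain ⟨v, hv⟩ := Finset.card_pos.1 (by omega : 0 < T.card)
  have hsub : T ⊆ {v} ∪ nb G v T ∪ nb Gᶜ v T := by
    intro x hx
    simp only [Finset.mem_union, Finset.mem_singleton, mem_nb, compl_adj]
    by_cases x = v <;> by_cases G.Adj v x <;> simp_all [eq_comm]
  have hle : (T.card : ℝ) ≤ 1 + (nb G v T).card + (nb Gᶜ v T).card := by
    have h1 := Finset.card_le_card hsub
    have h2 := Finset.card_union_le ({v} ∪ nb G v T) (nb Gᶜ v T)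
    have h3 := Finset.card_union_le {v} (nb G v T)
    rw [Finset.card_singleton] at h3
    exact_mod_cast (by omega)
  by_cases hc : κ * T.card ≤ (nb G v T).card
  · refine h ⟨{v}, by simpa using hv, nb G v T, nb_sub, ?_, by simpa using hcon.le, hc, Or.inr ?_⟩
    · simp [mem_nb]
    · intro b hb
      have := (mem_nb.1 hb).2.symm
      simp [dg, Finset.filter_singleton, this, hd]
  · push Not at hc
    refine h ⟨{v}, by simpa using hv, nb Gᶜ v T, nb_sub, ?_, by simpa using hcon.le, ?_, Or.inl ?_⟩
    · simp [mem_nb]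
    · nlinarith
    · intro b hb
      have := (mem_nb.1 hb).2.2
      rw [G.adj_comm] at this
      simp [dg, Finset.filter_singleton, this, hd]

set_option maxHeartbeats 1000000 in
theorem coreG {V : Type} (G : SimpleGraph V) (hC : NoC5 G) (d ρ κ μ η p : ℝ) (hd : 0 < d)
    (hd1 : d ≤ 1) (hρ : 0 < ρ) (hρ1 : ρ ≤ 1) (hκ : κ ≤ ρ / 50) (hμ : 0 < μ) (hμ1 : μ ≤ 1)
    (hη : η = d ^ 3 / 200) (hp : p = η ^ 2 * d ^ 2 * ρ * μ / 1000)
    (hrodl : ∀ T : Finset V, ∃ X ⊆ T, ρ * T.card ≤ X.card ∧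
      ((∀ v ∈ X, dg G v X ≤ X.card / 200) ∨ (∀ v ∈ X, dg Gᶜ v X ≤ X.card / 200)))
    (T : Finset V) (hn : 1 ≤ p * T.card) (hna : NA G p d T)
    (hdeg : ∀ v ∈ T, dg G v T ≤ T.card / 200) :
    ∃ S ⊆ T, d * T.card / 4 ≤ S.card ∧ ∀ S' ⊆ S, μ * S.card ≤ S'.card →
      Asym G (ρ * (d ^ 2 / 8)) κ d S' := by
  have hη0 : 0 < η := by rw [hη]; positivity
  have hd2 : d ^ 2 ≤ d := by nlinarith
  have hd3 : d ^ 3 ≤ d ^ 2 := by nlinarith [sq_nonneg d]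
  have hd20 : 0 < d ^ 2 := by positivity
  have hd30 : 0 < d ^ 3 := by positivity
  have hη1 : η ≤ 1 := by rw [hη]; linarith
  have hηd : η ≤ d := by rw [hη]; linarith
  have hη2 : η ^ 2 ≤ 1 := pow_le_one₀ hη0.le hη1
  have hρμ : ρ * μ ≤ 1 := by nlinarith
  have hρμ0 : 0 < ρ * μ := by positivity
  have hp8 : p ≤ d ^ 2 / 8 := by
    have h1 : η ^ 2 * (ρ * μ) ≤ 1 := by nlinarith
    have : p = d ^ 2 / 1000 * (η ^ 2 * (ρ * μ)) := by rw [hp]; ring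
    rw [this]
    nlinarith
  have hp4 : p ≤ 1 / 4 := by linarith
  have hT0 : (0:ℝ) ≤ T.card := by positivity
  have hp00 : 0 < p := by rw [hp]; positivity
  have hT2 : 2 ≤ T.card := by
    have : (2:ℝ) ≤ T.card := by nlinarith
    exact_mod_cast this
  obtain ⟨v, hv, hvd⟩ := step0 G p d hd hp4 T hT2 hna
  refine ⟨nb G v T, nb_sub, hvd, ?_⟩
  intro S' hS' hc'
  by_contra hnA
  obtain ⟨S2, hS2, hc2, hsp⟩ := hrodl S'
  rw [dg_eq] at hvd
  set q := p * T.card with hq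
  have hm : ρ * μ * d * T.card / 4 ≤ S2.card := by
    have h1 : μ * (d * T.card / 4) ≤ S'.card := le_trans (by gcongr) hc'
    have h2 : ρ * (μ * (d * T.card / 4)) ≤ S2.card := le_trans (by gcongr) hc2
    linarith
  have hqm : q ≤ η ^ 2 * d * S2.card / 250 := by
    have h1 : η ^ 2 * d * (ρ * μ * d * T.card / 4) ≤ η ^ 2 * d * S2.card := by gcongr
    rw [hq, hp]
    linarith
  have hS0 : (0:ℝ) ≤ S2.card := by positivity
  have hqm' : q ≤ η ^ 2 * S2.card / 250 := by
    have : η ^ 2 * d * S2.card ≤ η ^ 2 * 1 * S2.card := by gcongr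
    linarith
  have hηm : 250 ≤ η ^ 2 * S2.card := by linarith
  have hm250 : (250:ℝ) ≤ S2.card := by nlinarith
  have hSN : S2 ⊆ nb G v T := hS2.trans hS'
  have hkey := fun N1 N2 (h1 : N1 ⊆ S2) (h2 : N2 ⊆ S2) h3 h4 =>
    key G hC T d p hd hd1 hp8 hn hna hdeg v hv N1 N2 (h1.trans hSN) (h2.trans hSN) h3 h4
  rw [← hη] at hkey
  have hE2 : ∀ A ⊆ S2, ∀ B ⊆ S2, q ≤ A.card → q ≤ B.card → ∃ a ∈ A, ∃ b ∈ B, G.Adj a b := by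
    intro A hA B hB hqA hqB
    obtain ⟨X, hX, Y, hY, hXY, hadj⟩ := hkey A B hA hB hqA hqB
    have a0 : (0:ℝ) < A.card := by linarith
    have b0 : (0:ℝ) < B.card := by linarith
    have : (0:ℝ) < X.card * Y.card := lt_of_lt_of_le (by positivity) hXY
    have hXne : X.Nonempty := by
      rw [Finset.nonempty_iff_ne_empty]; rintro rfl; simp at this
    have hYne : Y.Nonempty := by
      rw [Finset.nonempty_iff_ne_empty]; rintro rfl; simp at this
    obtain ⟨x, hx⟩ := hXne
    obtain ⟨y, hy⟩ := hYne
    exact ⟨x, hX hx, y, hY hy, hadj x hx y hy⟩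
  rcases hsp with hsp | hsp
  · refine claimC G hC S2 η q hη0 hη1 hn (by linarith) hsp ?_ hE2
    intro N hN hqN
    by_contra hcon
    push Not at hcon
    obtain ⟨X, hX, Y, hY, hXY, hadj⟩ := hkey N _ hN (Finset.filter_subset _ _) hqN hcon.le
    set Bd := S2.filter (fun u => dg G u N < η * N.card) with hBd
    have a0 : (0:ℝ) < N.card := by linarith
    have b0 : (0:ℝ) < Bd.card := by linarith
    have h0 : (0:ℝ) < X.card * Y.card := lt_of_lt_of_le (by positivity) hXY
    have hYne : Y.Nonempty := by
      rw [Finset.nonempty_iff_ne_empty]; rintro rfl; simp at h0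
    obtain ⟨y, hy⟩ := hYne
    have hylow := (Finset.mem_filter.1 (hY hy)).2
    have hXd : (X.card : ℝ) ≤ dg G y N := by
      unfold dg
      have : X ⊆ N.filter (fun u => G.Adj y u) := by
        intro x hx
        exact Finset.mem_filter.2 ⟨hX hx, (hadj x hx y hy).symm⟩
      exact_mod_cast Finset.card_le_card this
    have hXl : (X.card : ℝ) < η * N.card := by linarith
    have hYl : (Y.card : ℝ) ≤ Bd.card := by exact_mod_cast Finset.card_le_card hY
    have : (X.card : ℝ) * Y.card ≤ X.card * Bd.card := by gcongr
    have : (X.card : ℝ) * Bd.card < η * N.card * Bd.card := by gcongr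
    linarith
  · have hna2 : NA Gᶜ (d ^ 2 / 8) d S2 := by
      refine na_of_not_asym Gᶜ (d ^ 2 / 8) (ρ * (d ^ 2 / 8)) κ d ρ (by positivity) rfl hκ S' S2
        hS2 hc2 ?_
      intro h
      have := h.compl
      rw [compl_compl] at this
      exact hnA this
    have hS22 : 2 ≤ S2.card := by
      have : (2:ℝ) ≤ S2.card := by linarith
      exact_mod_cast this
    obtain ⟨w, hw, hwd⟩ := step0 Gᶜ (d ^ 2 / 8) d hd (by linarith) S2 hS22 hna2
    rw [dg_eq] at hwd
    have hηd2 : η ^ 2 ≤ d ^ 2 := by nlinarith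
    have hN : d ^ 2 / 8 * S2.card ≤ (nb Gᶜ w S2).card := by nlinarith
    obtain ⟨X, hX, Y, hY, hXY, hadj⟩ := key Gᶜ hC.compl S2 d (d ^ 2 / 8) hd hd1 le_rfl
      (by nlinarith) hna2 hsp w hw (nb Gᶜ w S2) (nb Gᶜ w S2) (le_refl _) (le_refl _) hN hN
    rw [← hη] at hXY
    set N := nb Gᶜ w S2 with hNdef
    have hN0 : (0:ℝ) < N.card := by
      have : 0 < d * S2.card / 4 := by
        have : (0:ℝ) < S2.card := by linarith
        positivity
      linarith
    have hXN : (X.card : ℝ) ≤ N.card := by exact_mod_cast Finset.card_le_card hX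
    have hYN : (Y.card : ℝ) ≤ N.card := by exact_mod_cast Finset.card_le_card hY
    have hX0 : (0:ℝ) ≤ X.card := by positivity
    have hY0 : (0:ℝ) ≤ Y.card := by positivity
    have hX1 : η * N.card ≤ X.card := by
      have : (N.card : ℝ) * (η * N.card) ≤ N.card * X.card := by nlinarith
      exact le_of_mul_le_mul_left this hN0
    have hY1 : η * N.card ≤ Y.card := by
      have : (N.card : ℝ) * (η * N.card) ≤ N.card * Y.card := by nlinarith
      exact le_of_mul_le_mul_left this hN0
    have hqN : q ≤ η * N.card := by
      have h1 : η * (d * S2.card / 4) ≤ η * N.card := by gcongr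
      have h2 : η ^ 2 * d * S2.card ≤ η * d * S2.card := by
        have : η ^ 2 ≤ η := by nlinarith
        gcongr
      have h3 : 0 ≤ η * d * S2.card := by positivity
      linarith
    obtain ⟨a, ha, b, hb, hab⟩ := hE2 X (hX.trans nb_sub) Y (hY.trans nb_sub) (by linarith)
      (by linarith)
    exact (hadj a ha b hb).2 hab

theorem coreBoth {V : Type} (G : SimpleGraph V) (hC : NoC5 G) (d ρ κ μ η p : ℝ) (hd : 0 < d)
    (hd1 : d ≤ 1) (hρ : 0 < ρ) (hρ1 : ρ ≤ 1) (hκ : κ ≤ ρ / 50) (hμ : 0 < μ) (hμ1 : μ ≤ 1)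
    (hη : η = d ^ 3 / 200) (hp : p = η ^ 2 * d ^ 2 * ρ * μ / 1000)
    (hrodl : ∀ T : Finset V, ∃ X ⊆ T, ρ * T.card ≤ X.card ∧
      ((∀ v ∈ X, dg G v X ≤ X.card / 200) ∨ (∀ v ∈ X, dg Gᶜ v X ≤ X.card / 200)))
    (T' : Finset V) (hT' : 2 ≤ T'.card) (h : ¬ Asym G (ρ * p) κ d T') :
    ∃ S ⊆ T', ρ * d / 4 * T'.card ≤ S.card ∧ ∀ S' ⊆ S, μ * S.card ≤ S'.card →
      Asym G (ρ * (d ^ 2 / 8)) κ d S' := by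
  have hbig := asym_big G _ κ d hd.le (by linarith) T' hT' h
  have hp0 : 0 < p := by rw [hp, hη]; positivity
  have h' : ¬ Asym Gᶜ (ρ * p) κ d T' := by
    intro h1
    have := h1.compl
    rw [compl_compl] at this
    exact h this
  obtain ⟨T, hT, hc, hsp⟩ := hrodl T'
  have hn : 1 ≤ p * T.card := by
    have : p * (ρ * T'.card) ≤ p * T.card := by gcongr
    linarith
  have na1 := na_of_not_asym G p (ρ * p) κ d ρ hp0.le rfl hκ T' T hT hc h
  have na2 := na_of_not_asym Gᶜ p (ρ * p) κ d ρ hp0.le rfl hκ T' T hT hc h'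
  rcases hsp with hsp | hsp
  · obtain ⟨S, hS, hSc, hS'⟩ := coreG G hC d ρ κ μ η p hd hd1 hρ hρ1 hκ hμ hμ1 hη hp hrodl T hn
      na1 hsp
    refine ⟨S, hS.trans hT, le_trans ?_ hSc, hS'⟩
    nlinarith
  · obtain ⟨S, hS, hSc, hS'⟩ := coreG Gᶜ hC.compl d ρ κ μ η p hd hd1 hρ hρ1 hκ hμ hμ1 hη hp
      (by
        intro T
        obtain ⟨X, h1, h2, h3⟩ := hrodl T
        refine ⟨X, h1, h2, ?_⟩
        rw [compl_compl]; exact h3.symm) T hn na2 hsp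
    refine ⟨S, hS.trans hT, le_trans ?_ hSc, ?_⟩
    · nlinarith
    · intro S' h1 h2
      have := (hS' S' h1 h2).compl
      rwa [compl_compl] at this

/-- Inside every set there is a large set all of whose large subsets have asymmetric pairs. -/
theorem hered {V : Type} (G : SimpleGraph V) (hC : NoC5 G) (d ρ κ μ η p : ℝ) (hd : 0 < d)
    (hd1 : d ≤ 1) (hρ : 0 < ρ) (hρ1 : ρ ≤ 1) (hκ : κ ≤ ρ / 50) (hμ : 0 < μ) (hμ1 : μ ≤ 1)
    (hη : η = d ^ 3 / 200) (hp : p = η ^ 2 * d ^ 2 * ρ * μ / 1000)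
    (hrodl : ∀ T : Finset V, ∃ X ⊆ T, ρ * T.card ≤ X.card ∧
      ((∀ v ∈ X, dg G v X ≤ X.card / 200) ∨ (∀ v ∈ X, dg Gᶜ v X ≤ X.card / 200)))
    (T : Finset V) (hT : 2 ≤ μ * T.card) :
    ∃ S ⊆ T, ρ * d / 4 * μ * T.card ≤ S.card ∧ ∀ S' ⊆ S, μ * S.card ≤ S'.card →
      Asym G (ρ * p) κ d S' := by
  have hη0 : 0 < η := by rw [hη]; positivity
  have hη1 : η ≤ 1 := by
    rw [hη]; have := pow_le_one₀ (n := 3) hd.le hd1; linarith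
  have hp8 : p ≤ d ^ 2 / 8 := by
    have hρμ : ρ * μ ≤ 1 := by nlinarith
    have hρμ0 : 0 < ρ * μ := by positivity
    have hη2 : η ^ 2 ≤ 1 := pow_le_one₀ hη0.le hη1
    have h1 : η ^ 2 * (ρ * μ) ≤ 1 := by nlinarith
    have : p = d ^ 2 / 1000 * (η ^ 2 * (ρ * μ)) := by rw [hp]; ring
    rw [this]
    have : 0 < d ^ 2 := by positivity
    nlinarith
  by_cases hall : ∀ S' ⊆ T, μ * T.card ≤ S'.card → Asym G (ρ * p) κ d S'
  · refine ⟨T, le_refl _, ?_, hall⟩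
    have h1 : ρ * d ≤ 1 := by nlinarith
    have h2 : 0 < ρ * d := by positivity
    have h3 : ρ * d / 4 * μ ≤ 1 := by nlinarith
    have : (0:ℝ) ≤ T.card := by positivity
    nlinarith
  · push Not at hall
    obtain ⟨T', hT', hc', h'⟩ := hall
    have h2 : 2 ≤ T'.card := by
      have : (2:ℝ) ≤ T'.card := by linarith
      exact_mod_cast this
    obtain ⟨S, hS, hSc, hS'⟩ := coreBoth G hC d ρ κ μ η p hd hd1 hρ hρ1 hκ hμ hμ1 hη hp hrodl T'
      h2 h'
    refine ⟨S, hS.trans hT', le_trans ?_ hSc, ?_⟩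
    · have : ρ * d / 4 * (μ * T.card) ≤ ρ * d / 4 * T'.card := by gcongr
      linarith
    · intro S' h3 h4
      exact (hS' S' h3 h4).mono (by gcongr)

theorem recur {V : Type} (G : SimpleGraph V) (d s κ μ γ π : ℝ) (k : ℕ) (hd : 0 < d) (hs : 1 ≤ s)
    (hκ : 0 < κ) (hκ1 : κ ≤ 1) (hμ : μ = κ ^ k) (hγ : 0 < γ) (hγ1 : γ ≤ 1) (hπ : 0 < π)
    (hπ1 : π ≤ 1)
    (hered : ∀ T : Finset V, 2 ≤ μ * T.card → ∃ S ⊆ T, γ * T.card ≤ S.card ∧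
      ∀ S' ⊆ S, μ * S.card ≤ S'.card → Asym G π κ d S') (t : ℕ) :
    ∀ T : Finset V, s * (2 / (π * μ * γ)) ^ t ≤ T.card → Phi G T s (2 * d) ((k : ℝ) ^ t) := by
  have hμ0 : 0 < μ := by rw [hμ]; positivity
  have hμ1 : μ ≤ 1 := by rw [hμ]; exact pow_le_one₀ hκ.le hκ1
  have hQ0 : 0 < π * μ * γ := by positivity
  have hπγ : π * γ ≤ 1 := by nlinarith
  have hμQ : 2 ≤ μ * (2 / (π * μ * γ)) := by
    have : μ * (2 / (π * μ * γ)) = 2 / (π * γ) := by field_simp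
    rw [this, le_div_iff₀ (by positivity)]
    linarith
  have hQ1 : 1 ≤ 2 / (π * μ * γ) := by
    have : 0 < 2 / (π * μ * γ) := by positivity
    nlinarith
  set Q := 2 / (π * μ * γ) with hQ
  have hQe : π * μ * γ * Q = 2 := by rw [hQ]; field_simp
  induction t with
  | zero =>
    intro T hT
    simp only [pow_zero, mul_one] at *
    exact Phi.base G T s (2 * d) (by linarith) (by linarith) hT
  | succ t ih =>
    intro T hT
    have hQt : 1 ≤ Q ^ t := one_le_pow₀ hQ1
    have hx1 : 1 ≤ s * Q ^ t := by nlinarith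
    have hT' : s * Q ^ t * Q ≤ T.card := by rw [pow_succ] at hT; linarith
    obtain ⟨S, hS, hSc, hA⟩ := hered T (by
      have h1 : μ * (s * Q ^ t * Q) ≤ μ * T.card := by gcongr
      nlinarith)
    have hS2 : 2 * (s * Q ^ t) ≤ π * μ * S.card := by
      have h1 : π * μ * (γ * T.card) ≤ π * μ * S.card := by gcongr
      have h2 : π * μ * γ * (s * Q ^ t * Q) ≤ π * μ * γ * T.card := by gcongr
      have h3 : π * μ * γ * (s * Q ^ t * Q) = 2 * (s * Q ^ t) := by
        rw [← hQe]; ring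
      linarith
    have inner : ∀ j i : ℕ, i + j = k → ∀ S' ⊆ S, κ ^ i * S.card ≤ S'.card →
        Phi G S' s (2 * d) (j * (k : ℝ) ^ t) := by
      intro j
      induction j with
      | zero => intro i _ S' _ _; simpa using Phi.zero G S' s (2 * d)
      | succ j ihj =>
        intro i hi S' hS' hc
        have hle : μ ≤ κ ^ i := by
          rw [hμ]; exact pow_le_pow_of_le_one hκ.le hκ1 (by omega)
        have hμS : μ * S.card ≤ S'.card := le_trans (by gcongr) hc
        obtain ⟨A, hAS, B, hBS, hAB, hcA, hcB, hsp⟩ := hA S' hS' hμS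
        have hBc : κ ^ (i + 1) * S.card ≤ B.card := by
          have : κ * (κ ^ i * S.card) ≤ κ * S'.card := by gcongr
          rw [pow_succ]; linarith
        have hAc : 2 * (s * Q ^ t) ≤ A.card := by
          have : π * (μ * S.card) ≤ π * S'.card := by gcongr
          linarith
        have hm := merge G S' A B d s ((k : ℝ) ^ t) (j * (k : ℝ) ^ t) hd hAS hBS hAB hsp
          (ihj (i + 1) (by omega) B (hBS.trans hS') hBc)
          (fun A' _ h2 => ih A' (by linarith))
        have e : ((j + 1 : ℕ) : ℝ) * (k : ℝ) ^ t = (k : ℝ) ^ t + j * (k : ℝ) ^ t := by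
          push_cast; ring
        rw [e]; exact hm
    have := inner k 0 (by omega) S (le_refl _) (by simp)
    rw [pow_succ, mul_comm ((k : ℝ) ^ t)]
    exact this.mono hS

theorem numeric (ρ : ℝ) (hρ : 0 < ρ) (hρ1 : ρ ≤ 1) :
    ∃ C : ℝ, 0 < C ∧ ∀ d : ℝ, 0 < d → d ≤ 1 / 4 → ∃ k t : ℕ,
      1 / (d / 12) ^ 2 ≤ (k : ℝ) ^ t ∧
      (2 / ((ρ * (((d / 12) ^ 3 / 200) ^ 2 * (d / 12) ^ 2 * ρ * (ρ / 50) ^ k / 1000)) *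
        (ρ / 50) ^ k * (ρ * (d / 12) / 4 * (ρ / 50) ^ k))) ^ t ≤
      (2 : ℝ) ^ (C * (Real.logb 2 (1 / d)) ^ 2 / Real.logb 2 (Real.logb 2 (1 / d))) := by
  set a := Real.logb 2 (50 / ρ) with ha
  set c := 2 * (4 * 1000 * 40000) / ρ ^ 3 with hc
  set a' := Real.logb 2 c with ha'
  have h50 : 1 < 50 / ρ := by rw [lt_div_iff₀ hρ]; linarith
  have ha0 : 0 < a := Real.logb_pos (by norm_num) h50
  have hρ3 : ρ ^ 3 ≤ 1 := pow_le_one₀ hρ.le hρ1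
  have hc1 : 1 < c := by rw [hc, lt_div_iff₀ (by positivity)]; linarith
  have ha'0 : 0 < a' := Real.logb_pos (by norm_num) hc1
  have e50 : (2:ℝ) ^ a = 50 / ρ := Real.rpow_logb (by norm_num) (by norm_num) (by linarith)
  have ec : (2:ℝ) ^ a' = c := Real.rpow_logb (by norm_num) (by norm_num) (by linarith)
  refine ⟨7 * (a' + 27 + 6 * a), by positivity, ?_⟩
  intro d hd hd4
  set L := Real.logb 2 (1 / d) with hL
  have eL : (2:ℝ) ^ L = 1 / d := Real.rpow_logb (by norm_num) (by norm_num) (by positivity)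
  have hL2 : 2 ≤ L := by
    rw [hL, Real.le_logb_iff_rpow_le (by norm_num) (by positivity), le_div_iff₀ hd]
    norm_num; linarith
  set l := Real.logb 2 L with hl
  have el : (2:ℝ) ^ l = L := Real.rpow_logb (by norm_num) (by norm_num) (by linarith)
  have hl1 : 1 ≤ l := by
    rw [hl, Real.le_logb_iff_rpow_le (by norm_num) (by linarith)]
    simpa using hL2
  have hlL : l ≤ L := by
    rw [hl, Real.logb_le_iff_le_rpow (by norm_num) (by linarith)]
    rw [eL, hL]
    rw [Real.logb, div_le_iff₀ (Real.log_pos (by norm_num))]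
    have h1 := Real.log_le_sub_one_of_pos (x := 1 / d / 2) (by positivity)
    rw [Real.log_div (by positivity) (by norm_num)] at h1
    have h2 : 0.6931471803 < Real.log 2 := Real.log_two_gt_d9
    have h3 : Real.log 2 < 0.6931471808 := Real.log_two_lt_d9
    have h4 : 4 ≤ 1 / d := by rw [le_div_iff₀ hd]; linarith
    nlinarith
  refine ⟨⌈L⌉₊, ⌈6 * L / l⌉₊, ?_, ?_⟩
  · have h1 : 1 / (d / 12) ^ 2 ≤ (2:ℝ) ^ (6 * L) := by
      have : (2:ℝ) ^ (6 * L) = (1 / d) ^ 6 := by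
        rw [mul_comm, Real.rpow_mul (by norm_num), eL]; norm_cast
      rw [this]
      have : 1 / (d / 12) ^ 2 = 144 * (1 / d) ^ 2 := by field_simp; norm_num
      rw [this]
      have h4 : 4 ≤ 1 / d := by rw [le_div_iff₀ hd]; linarith
      have : (4:ℝ) ^ 4 ≤ (1 / d) ^ 4 := by gcongr
      have h5 : (1 / d) ^ 6 = (1 / d) ^ 4 * (1 / d) ^ 2 := by ring
      rw [h5]
      gcongr
      linarith
    refine h1.trans ?_
    calc (2:ℝ) ^ (6 * L) ≤ (2:ℝ) ^ (l * (⌈6 * L / l⌉₊ : ℝ)) := by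
          apply Real.rpow_le_rpow_of_exponent_le (by norm_num)
          have := Nat.le_ceil (6 * L / l)
          rw [div_le_iff₀ (by linarith)] at this
          linarith
      _ = L ^ ⌈6 * L / l⌉₊ := by
          rw [Real.rpow_mul (by norm_num), el, Real.rpow_natCast]
      _ ≤ _ := by
          gcongr
          exact Nat.le_ceil L
  · set k := ⌈L⌉₊ with hk
    have hkL : (k : ℝ) ≤ 2 * L := by
      have := Nat.ceil_lt_add_one (by linarith : 0 ≤ L)
      rw [← hk] at this
      linarith
    have htL : (⌈6 * L / l⌉₊ : ℝ) ≤ 7 * L / l := by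
      have := Nat.ceil_lt_add_one (by positivity : 0 ≤ 6 * L / l)
      have h2 : 1 ≤ L / l := by rw [le_div_iff₀ (by linarith)]; linarith
      have h3 : 7 * L / l = 6 * L / l + L / l := by ring
      linarith
    have hQ : 2 / ((ρ * (((d / 12) ^ 3 / 200) ^ 2 * (d / 12) ^ 2 * ρ * (ρ / 50) ^ k / 1000)) *
        (ρ / 50) ^ k * (ρ * (d / 12) / 4 * (ρ / 50) ^ k)) =
        c * (12 * (1 / d)) ^ 9 * ((50 / ρ) ^ k) ^ 3 := by
      have e1 : ρ / 50 = (50 / ρ)⁻¹ := by rw [inv_div]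
      rw [e1, inv_pow]
      have : (50 / ρ) ^ k ≠ 0 := by positivity
      set z := (50 / ρ) ^ k with hz
      rw [hc]
      field_simp
      norm_num
    have h1 : c ≤ (2:ℝ) ^ (a' * L) := by
      rw [← ec]
      apply Real.rpow_le_rpow_of_exponent_le (by norm_num)
      nlinarith
    have h2 : (12 * (1 / d)) ^ 9 ≤ (2:ℝ) ^ (27 * L) := by
      have : (2:ℝ) ^ (27 * L) = ((1 / d) ^ 3) ^ 9 := by
        rw [mul_comm, Real.rpow_mul (by norm_num), eL, ← pow_mul]; norm_cast
      rw [this]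
      have h4 : 4 ≤ 1 / d := by rw [le_div_iff₀ hd]; linarith
      have h5 : (1 / d) ^ 3 = (1 / d) ^ 2 * (1 / d) := by ring
      have : 12 ≤ (1 / d) ^ 2 := by nlinarith
      rw [h5]
      gcongr
    have h3 : ((50 / ρ) ^ k) ^ 3 ≤ (2:ℝ) ^ (6 * a * L) := by
      have e2 : ((50 / ρ) ^ k) ^ 3 = (2:ℝ) ^ (a * (k * 3 : ℕ)) := by
        rw [← pow_mul, Real.rpow_mul (by norm_num), e50, Real.rpow_natCast]
      rw [e2]
      apply Real.rpow_le_rpow_of_exponent_le (by norm_num)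
      push_cast
      nlinarith
    have hQb : c * (12 * (1 / d)) ^ 9 * ((50 / ρ) ^ k) ^ 3 ≤ (2:ℝ) ^ ((a' + 27 + 6 * a) * L) := by
      have : (a' + 27 + 6 * a) * L = a' * L + 27 * L + 6 * a * L := by ring
      rw [this, Real.rpow_add (by norm_num), Real.rpow_add (by norm_num)]
      gcongr
    rw [hQ]
    calc _ ≤ ((2:ℝ) ^ ((a' + 27 + 6 * a) * L)) ^ ⌈6 * L / l⌉₊ := by
          gcongr
      _ = (2:ℝ) ^ ((a' + 27 + 6 * a) * L * ⌈6 * L / l⌉₊) := by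
          rw [← Real.rpow_natCast, ← Real.rpow_mul (by norm_num)]
      _ ≤ _ := by
          apply Real.rpow_le_rpow_of_exponent_le (by norm_num)
          have h6 : (a' + 27 + 6 * a) * L * ⌈6 * L / l⌉₊ ≤ (a' + 27 + 6 * a) * L * (7 * L / l) := by
            gcongr
          refine h6.trans (le_of_eq ?_)
          ring

/-- Improved Rödl theorem for `C₅`: there is `C > 0` such that for every `0 < d ≤ 1/4`,
with `δ = 2 ^ (-C(log(1/d))²/(log log (1/d)))` (logs base 2), every `C₅`-free graph `G`
has a set `X` of at least `δ|V(G)|` vertices such that in one of `G[X]` or the complement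
of `G` induced on `X`, every vertex has degree at most `d|X|`. -/
theorem rodl_c5_improved :
    ∃ C : ℝ, 0 < C ∧
      ∀ d : ℝ, 0 < d → d ≤ 1 / 4 →
        ∀ (n : ℕ) (G : SimpleGraph (Fin n)), C5Free G →
          ∃ X : Finset (Fin n),
            (2 : ℝ) ^ (-(C * (Real.logb 2 (1 / d)) ^ 2 /
                Real.logb 2 (Real.logb 2 (1 / d)))) * n ≤ (X.card : ℝ) ∧
            ((∀ v ∈ X, ((X.filter (fun u => G.Adj v u)).card : ℝ) ≤ d * X.card) ∨
             (∀ v ∈ X, ((X.filter (fun u => Gᶜ.Adj v u)).card : ℝ) ≤ d * X.card)) := by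
  obtain ⟨ρ, hρ, hρ1, hrodl⟩ := rodl_const
  obtain ⟨C, hC0, hnum⟩ := numeric ρ hρ hρ1
  refine ⟨C, hC0, ?_⟩
  intro d hd hd4 n G hfree
  have hC := noC5_of_free G hfree
  obtain ⟨k, t, hkt, hQ⟩ := hnum d hd hd4
  set E := C * (Real.logb 2 (1 / d)) ^ 2 / Real.logb 2 (Real.logb 2 (1 / d)) with hE
  set d' := d / 12 with hd'
  set κ := ρ / 50 with hκ
  set μ := κ ^ k with hμ
  set p := (d' ^ 3 / 200) ^ 2 * d' ^ 2 * ρ * μ / 1000 with hp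
  set γ := ρ * d' / 4 * μ with hγ
  have hd0 : 0 < d' := by positivity
  have hd1 : d' ≤ 1 := by rw [hd']; linarith
  have hκ0 : 0 < κ := by positivity
  have hκ1 : κ ≤ 1 := by rw [hκ]; linarith
  have hμ0 : 0 < μ := by positivity
  have hμ1 : μ ≤ 1 := pow_le_one₀ hκ0.le hκ1
  have hp0 : 0 < p := by positivity
  have hd3 : d' ^ 3 ≤ 1 := pow_le_one₀ hd0.le hd1
  have hd30 : 0 < d' ^ 3 := by positivity
  have hd2 : d' ^ 2 ≤ 1 := pow_le_one₀ hd0.le hd1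
  have hp1 : p ≤ 1 := by
    have h1 : (d' ^ 3 / 200) ^ 2 ≤ 1 := pow_le_one₀ (by positivity) (by linarith)
    have h2 : (d' ^ 3 / 200) ^ 2 * d' ^ 2 ≤ 1 := mul_le_one₀ h1 (by positivity) hd2
    have h3 : (d' ^ 3 / 200) ^ 2 * d' ^ 2 * ρ ≤ 1 := mul_le_one₀ h2 (by positivity) hρ1
    have h4 : (d' ^ 3 / 200) ^ 2 * d' ^ 2 * ρ * μ ≤ 1 := mul_le_one₀ h3 (by positivity) hμ1
    rw [hp]; linarith
  have hπ0 : 0 < ρ * p := by positivity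
  have hπ1 : ρ * p ≤ 1 := mul_le_one₀ hρ1 hp0.le hp1
  have hγ0 : 0 < γ := by positivity
  have hγ1 : γ ≤ 1 := by
    have h1 : ρ * d' ≤ 1 := mul_le_one₀ hρ1 hd0.le hd1
    exact mul_le_one₀ (by linarith) hμ0.le hμ1
  have hE0 : (0:ℝ) < (2:ℝ) ^ E := by positivity
  rw [Real.rpow_neg (by norm_num)]
  have hcard : ((Finset.univ : Finset (Fin n)).card : ℝ) = n := by simp
  by_cases hs : 1 ≤ ((2:ℝ) ^ E)⁻¹ * n
  · have hP := recur G d' (((2:ℝ) ^ E)⁻¹ * n) κ μ γ (ρ * p) k hd0 hs hκ0 hκ1 hμ hγ0 hγ1 hπ0 hπ1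
      (fun T hT => hered G hC d' ρ κ μ (d' ^ 3 / 200) p hd0 hd1 hρ hρ1 hκ.le hμ0 hμ1 rfl hp
        (hrodl (Fin n) G hC) T hT) t Finset.univ (by
          rw [hcard]
          calc ((2:ℝ) ^ E)⁻¹ * n * (2 / (ρ * p * μ * γ)) ^ t
              ≤ ((2:ℝ) ^ E)⁻¹ * n * (2:ℝ) ^ E := by gcongr
            _ = n := by field_simp)
    obtain ⟨X, _, hc, hx⟩ := extract G Finset.univ d' _ _ hd0 (by linarith) hkt hP
    have e12 : 12 * d' = d := by rw [hd']; ring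
    rw [e12] at hx
    refine ⟨X, le_trans ?_ hc, ?_⟩
    · rw [le_div_iff₀ (by positivity)]
      have : 2 * d' ≤ 1 := by rw [hd']; linarith
      nlinarith
    · rcases hx with hx | hx
      · exact Or.inl hx
      · refine Or.inr fun v hv => ?_
        have := hx v hv
        unfold dg at this
        convert this
  · push Not at hs
    by_cases hn : n = 0
    · subst hn
      exact ⟨∅, by simp, by simp⟩
    · have v : Fin n := ⟨0, Nat.pos_of_ne_zero hn⟩
      refine ⟨{v}, by simpa using hs.le, Or.inl ?_⟩
      intro u hu
      rw [Finset.mem_singleton] at hu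
      subst hu
      simp [Finset.filter_singleton, hd.le]
end

section
/- Let 𝓘 be a hereditary class of graphs, let σ ≥ 0 and 0 < ε ≤ 1, and suppose that for every graph G ∈ 𝓘 with n ≥ 2 vertices and every real c with 0 ≤ c ≤ 1/2 there exist disjoint nonempty subsets A, B ⊆ V(G) with |A| ≥ c^σ·n and |B| ≥ ε·n such that the edge-density between A and B is either at most c or at least 1 − c. Then there exists κ > 0 such that every graph G ∈ 𝓘 with n ≥ 2 vertices contains an induced subgraph that is a cograph with at least 2^{κ·√(log n · log log n)} vertices. -/
open SimpleGraph
open scoped Classical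

/-- A cograph is a graph with no induced path on 4 vertices. -/
def IsCograph {V : Type} (G : SimpleGraph V) : Prop :=
  ¬ Nonempty (pathGraph 4 ↪g G)

/-- A class of graphs (one predicate for each number of vertices) is hereditary if it is
closed under isomorphic copies of induced subgraphs. -/
def Hereditary (I : ∀ n : ℕ, SimpleGraph (Fin n) → Prop) : Prop :=
  ∀ (m n : ℕ) (G : SimpleGraph (Fin n)) (H : SimpleGraph (Fin m)),
    I n G → Nonempty (H ↪g G) → I m H

/-- Cographs are closed under disjoint union and join. -/
lemma cograph_union {n : ℕ} (G : SimpleGraph (Fin n)) (S T : Finset (Fin n)) (p : Prop)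
    (hS : IsCograph (G.induce (S : Set (Fin n)))) (hT : IsCograph (G.induce (T : Set (Fin n))))
    (hST : ∀ a ∈ S, ∀ b ∈ T, (G.Adj a b ↔ p)) :
    IsCograph (G.induce ((S ∪ T : Finset (Fin n)) : Set (Fin n))) := by
  rintro ⟨f⟩
  have key : ∀ b : Fin 4 → Bool, ∀ q : Bool,
      (∀ i j, b i = true → b j = false →
        (decide (i.val + 1 = j.val ∨ j.val + 1 = i.val) = q)) →
      (∀ i, b i = true) ∨ (∀ i, b i = false) := by decide
  have hadj : ∀ i j, (G.Adj (f i).1 (f j).1 ↔ (i.val + 1 = j.val ∨ j.val + 1 = i.val)) := by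
    intro i j
    have := f.map_rel_iff (a := i) (b := j)
    rw [pathGraph_adj] at this
    exact this
  have hmem : ∀ i, (f i).1 ∈ S ∨ (f i).1 ∈ T := by
    intro i
    have := (f i).2
    simpa using this
  have hinj : ∀ i j, (f i).1 = (f j).1 → i = j := fun i j h => f.injective (Subtype.ext h)
  rcases key (fun i => decide ((f i).1 ∈ S)) (decide p) (by
    intro i j hi hj
    simp only [decide_eq_true_eq, decide_eq_false_iff_not] at hi hj
    have hj' := (hmem j).resolve_left hj
    have h1 := hST _ hi _ hj'
    rw [hadj] at h1
    exact decide_eq_decide.mpr h1) with h | h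
  · simp only [decide_eq_true_eq] at h
    refine hS ⟨⟨⟨fun i => ⟨(f i).1, by simpa using h i⟩, fun i j hij => hinj i j ?_⟩, ?_⟩⟩
    · simpa using hij
    · intro i j
      rw [pathGraph_adj]
      exact hadj i j
  · simp only [decide_eq_false_iff_not] at h
    refine hT ⟨⟨⟨fun i => ⟨(f i).1, by simpa using (hmem i).resolve_left (h i)⟩,
      fun i j hij => hinj i j ?_⟩, ?_⟩⟩
    · simpa using hij
    · intro i j
      rw [pathGraph_adj]
      exact hadj i j

lemma cograph_subset {n : ℕ} (G : SimpleGraph (Fin n)) (S T : Finset (Fin n))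
    (hT : IsCograph (G.induce (T : Set (Fin n)))) (h : S ⊆ T) :
    IsCograph (G.induce (S : Set (Fin n))) := by
  rintro ⟨f⟩
  exact hT ⟨f.trans (SimpleGraph.induceHomOfLE G (by exact_mod_cast h))⟩

lemma cograph_small {n : ℕ} (G : SimpleGraph (Fin n)) (S : Finset (Fin n)) (h : S.card ≤ 3) :
    IsCograph (G.induce (S : Set (Fin n))) := by
  rintro ⟨f⟩
  have := Fintype.card_le_of_injective f f.injective
  simp at this
  omega

/-- Every vertex set of size at least `m` contains an induced cograph of size at least `k`. -/
def CoSize {n : ℕ} (G : SimpleGraph (Fin n)) (m : ℝ) (k : ℕ) : Prop :=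
  ∀ U : Finset (Fin n), m ≤ U.card →
    ∃ S ⊆ U, k ≤ S.card ∧ IsCograph (G.induce (S : Set (Fin n)))

lemma CoSize.mono {n : ℕ} {G : SimpleGraph (Fin n)} {m m' : ℝ} {k k' : ℕ}
    (h : CoSize G m k) (hm : m ≤ m') (hk : k' ≤ k) : CoSize G m' k' := by
  intro U hU
  obtain ⟨S, h1, h2, h3⟩ := h U (hm.trans hU)
  exact ⟨S, h1, hk.trans h2, h3⟩

/-- Number of pairs in `A × B` related by `R`. -/
noncomputable def cnt {n : ℕ} (R : Fin n → Fin n → Prop) (A B : Finset (Fin n)) : ℕ :=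
  (Rel.interedges R A B).card

/-- The density property for subsets of a fixed graph. -/
def DensProp {n : ℕ} (G : SimpleGraph (Fin n)) (σ ε : ℝ) : Prop :=
  ∀ U : Finset (Fin n), 2 ≤ U.card → ∀ c : ℝ, 0 ≤ c → c ≤ 1 / 2 →
    ∃ A B : Finset (Fin n), A ⊆ U ∧ B ⊆ U ∧ Disjoint A B ∧
      c ^ σ * U.card ≤ (A.card : ℝ) ∧ ε * U.card ≤ (B.card : ℝ) ∧
      ((cnt G.Adj A B : ℝ) ≤ c * A.card * B.card ∨
       (cnt (fun a b => ¬ G.Adj a b) A B : ℝ) ≤ c * A.card * B.card)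

lemma sparse_vertices {n : ℕ} (R : Fin n → Fin n → Prop) (A B : Finset (Fin n)) (c : ℝ)
    (h : (cnt R A B : ℝ) ≤ c * A.card * B.card) (hc : 0 < c) :
    ∃ A' ⊆ A, (A.card : ℝ) / 2 ≤ A'.card ∧
      ∀ a ∈ A', ((B.filter (fun b => R a b)).card : ℝ) ≤ 2 * c * B.card := by
  rcases B.eq_empty_or_nonempty with hB | hB
  · subst hB
    exact ⟨A, le_rfl, by linarith [(Nat.cast_nonneg A.card : (0:ℝ) ≤ _)], by simp⟩
  have hBpos : (0:ℝ) < B.card := by exact_mod_cast hB.card_pos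
  set A' := A.filter (fun a => ((B.filter (fun b => R a b)).card : ℝ) ≤ 2 * c * B.card) with hA'
  set A'' := A.filter
    (fun a => ¬ ((B.filter (fun b => R a b)).card : ℝ) ≤ 2 * c * B.card) with hA''
  refine ⟨A', Finset.filter_subset _ _, ?_, fun a ha => (Finset.mem_filter.mp ha).2⟩
  have hsum : A'.card + A''.card = A.card := Finset.card_filter_add_card_filter_not _
  have hsumR : (A'.card : ℝ) + A''.card = A.card := by exact_mod_cast hsum
  have hcount : cnt R A B = ∑ a ∈ A, (B.filter (fun b => R a b)).card := by
    unfold cnt Rel.interedges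
    rw [Finset.card_filter, Finset.sum_product]
    refine Finset.sum_congr rfl (fun a _ => ?_)
    rw [Finset.card_filter]
  have h1 : ∑ a ∈ A'', (2 * c * B.card : ℝ) ≤ cnt R A B := by
    rw [hcount]
    push_cast
    calc ∑ a ∈ A'', (2 * c * B.card : ℝ)
        ≤ ∑ a ∈ A'', ((B.filter (fun b => R a b)).card : ℝ) := by
          apply Finset.sum_le_sum
          intro a ha
          exact (not_le.mp (Finset.mem_filter.mp ha).2).le
      _ ≤ _ := Finset.sum_le_sum_of_subset_of_nonneg (Finset.filter_subset _ _)
          (fun _ _ _ => Nat.cast_nonneg _)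
  rw [Finset.sum_const, nsmul_eq_mul] at h1
  have h2 : (c * B.card) * (2 * A''.card) ≤ (c * B.card) * A.card := by nlinarith
  have h3 := le_of_mul_le_mul_left h2 (by positivity)
  linarith

lemma half_left {n : ℕ} (R : Fin n → Fin n → Prop) (S B : Finset (Fin n)) (t : ℕ) (ht : 0 < t)
    (hS : S.card ≤ t)
    (h : ∀ a ∈ S, ((B.filter (fun b => R a b)).card : ℝ) ≤ 2 * (1 / (4 * t)) * B.card) :
    ∃ B' ⊆ B, (B.card : ℝ) / 2 ≤ B'.card ∧ ∀ a ∈ S, ∀ b ∈ B', ¬ R a b := by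
  have htR : (0:ℝ) < t := by exact_mod_cast ht
  have hSR : (S.card : ℝ) ≤ t := by exact_mod_cast hS
  set N := S.biUnion (fun a => B.filter (fun b => R a b)) with hN
  refine ⟨B \ N, Finset.sdiff_subset, ?_, ?_⟩
  · have h1 : (N.card : ℝ) ≤ B.card / 2 := by
      calc (N.card : ℝ) ≤ ((∑ a ∈ S, (B.filter (fun b => R a b)).card : ℕ) : ℝ) := by
            exact_mod_cast Finset.card_biUnion_le
        _ = ∑ a ∈ S, ((B.filter (fun b => R a b)).card : ℝ) := by push_cast; rfl
        _ ≤ ∑ a ∈ S, (2 * (1 / (4 * t)) * B.card : ℝ) := Finset.sum_le_sum h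
        _ = S.card * (2 * (1 / (4 * t)) * B.card : ℝ) := by rw [Finset.sum_const, nsmul_eq_mul]
        _ ≤ t * (2 * (1 / (4 * t)) * B.card : ℝ) := by gcongr
        _ = B.card / 2 := by field_simp; ring
    have h2 : (B.card : ℝ) ≤ (B \ N).card + N.card := by
      exact_mod_cast Finset.card_le_card_sdiff_add_card
    linarith
  · intro a ha b hb hR
    rw [Finset.mem_sdiff] at hb
    exact hb.2 (Finset.mem_biUnion.mpr ⟨a, ha, Finset.mem_filter.mpr ⟨hb.1, hR⟩⟩)

lemma CoSize.step {n : ℕ} {G : SimpleGraph (Fin n)} {σ ε : ℝ} (hG : DensProp G σ ε)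
    (hε : 0 < ε) {t : ℕ} (ht : 0 < t)
    {m : ℝ} (hm : 2 ≤ m) {a b : ℕ} (hat : a ≤ t)
    (ha : CoSize G ((1 / (4 * t : ℝ)) ^ σ / 2 * m) a) (hb : CoSize G (ε / 2 * m) b) :
    CoSize G m (a + b) := by
  intro U hU
  have htR : (1:ℝ) ≤ t := by exact_mod_cast ht
  have hcpos : (0:ℝ) < 1 / (4 * t) := by positivity
  have hc2 : (1 / (4 * t) : ℝ) ≤ 1 / 2 := by
    apply one_div_le_one_div_of_le <;> linarith
  obtain ⟨A, B, hAU, hBU, hAB, hA, hB, hd⟩ :=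
    hG U (by exact_mod_cast hm.trans hU) _ hcpos.le hc2
  -- a relation which is sparse and is adjacency or non-adjacency
  have hR : ∃ (R : Fin n → Fin n → Prop) (p : Prop), (∀ x y, ¬ R x y → (G.Adj x y ↔ p)) ∧
      (cnt R A B : ℝ) ≤ 1 / (4 * t) * A.card * B.card := by
    rcases hd with hd | hd
    · exact ⟨G.Adj, False, fun x y h => by simpa using h, hd⟩
    · exact ⟨fun a b => ¬ G.Adj a b, True, fun x y h => by simpa using h, hd⟩
  obtain ⟨R, p, hRp, hRd⟩ := hR
  obtain ⟨A', hA'A, hA'c, hA'⟩ := sparse_vertices R A B _ hRd hcpos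
  have hpos : (0:ℝ) ≤ (1 / (4 * t : ℝ)) ^ σ := by positivity
  obtain ⟨S0, hS0A, hS0c, hS0⟩ := ha A' (by
    have := mul_le_mul_of_nonneg_left hU hpos
    linarith)
  obtain ⟨S, hSS0, hSc⟩ := Finset.exists_subset_card_eq hS0c
  have hS := cograph_subset G S S0 hS0 hSS0
  have hSA' := hSS0.trans hS0A
  obtain ⟨B', hB'B, hB'c, hB'⟩ := half_left R S B t ht (hSc.le.trans hat)
    (fun x hx => hA' x (hSA' hx))
  obtain ⟨T, hTB, hTc, hT⟩ := hb B' (by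
    have := mul_le_mul_of_nonneg_left hU hε.le
    linarith)
  refine ⟨S ∪ T, Finset.union_subset (hSA'.trans (hA'A.trans hAU))
    (hTB.trans (hB'B.trans hBU)), ?_, cograph_union G S T p hS hT
      (fun x hx y hy => hRp x y (hB' x hx y (hTB hy)))⟩
  rw [Finset.card_union_of_disjoint
    (Finset.disjoint_of_subset_left (hSA'.trans hA'A)
      (Finset.disjoint_of_subset_right (hTB.trans hB'B) hAB))]
  omega

lemma CoSize.iter {n : ℕ} {G : SimpleGraph (Fin n)} {σ ε : ℝ} (hG : DensProp G σ ε)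
    (hε : 0 < ε) (hε1 : ε ≤ 1) {t : ℕ} (ht : 0 < t) {a : ℕ} (hat : a ≤ t) (j : ℕ) :
    ∀ m : ℝ, 2 ≤ (ε / 2) ^ j * m →
      CoSize G ((1 / (4 * t : ℝ)) ^ σ / 2 * ((ε / 2) ^ j * m)) a → CoSize G m (j * a) := by
  induction j with
  | zero => intro m _ _ U _; exact ⟨∅, by simp, by simp, cograph_small G _ (by simp)⟩
  | succ j ih =>
    intro m hm hc
    have hpos : (0:ℝ) ≤ (1 / (4 * t : ℝ)) ^ σ := by positivity
    have hp1 : (ε / 2) ^ (j + 1) ≤ 1 := pow_le_one₀ (by linarith) (by linarith)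
    have hp0 : 0 < (ε / 2) ^ (j + 1) := by positivity
    have hm0 : 0 < m := by
      by_contra h
      have := mul_nonpos_of_nonneg_of_nonpos hp0.le (not_lt.mp h)
      linarith
    have hle : (ε / 2) ^ (j + 1) * m ≤ m := by nlinarith
    have heq : (ε / 2) ^ (j + 1) * m = (ε / 2) ^ j * (ε / 2 * m) := by ring
    have h1 := CoSize.step hG hε ht (hm.trans hle) hat
      (hc.mono (by gcongr) le_rfl) (ih (ε / 2 * m) (heq ▸ hm) (heq ▸ hc))
    exact h1.mono le_rfl (by ring_nf; exact le_rfl)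

lemma CoSize.iter2 {n : ℕ} {G : SimpleGraph (Fin n)} {σ ε : ℝ} (hG : DensProp G σ ε)
    (hσ : 0 ≤ σ) (hε : 0 < ε) (hε1 : ε ≤ 1) {t k : ℕ} (ht : 0 < t) (hk : 0 < k) (r : ℕ) :
    ∀ m : ℝ, 2 ≤ ((1 / (4 * t : ℝ)) ^ σ / 2 * (ε / 2) ^ k) ^ r * m →
      CoSize G m (min t (k ^ r)) := by
  have htR : (1:ℝ) ≤ t := by exact_mod_cast ht
  have hpos : (0:ℝ) < (1 / (4 * t : ℝ)) ^ σ := by positivity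
  have hle1 : (1 / (4 * t : ℝ)) ^ σ ≤ 1 := by
    apply Real.rpow_le_one (by positivity) _ hσ
    rw [div_le_one (by positivity)]; linarith
  have hp1 : (ε / 2) ^ k ≤ 1 := pow_le_one₀ (by linarith) (by linarith)
  have hp0 : 0 < (ε / 2) ^ k := by positivity
  set α := (1 / (4 * t : ℝ)) ^ σ / 2 with hα
  have hα0 : 0 < α := by positivity
  have hα1 : α ≤ 1 := by linarith
  induction r with
  | zero =>
    intro m hm U hU
    simp only [pow_zero, one_mul] at hm
    have : (1:ℝ) ≤ U.card := by linarith
    have hU1 : 1 ≤ U.card := by exact_mod_cast this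
    obtain ⟨S, hS, hc⟩ := Finset.exists_subset_card_eq hU1
    exact ⟨S, hS, by rw [hc]; simp, cograph_small G _ (by omega)⟩
  | succ r ih =>
    intro m hm
    have hγ1 : (α * (ε / 2) ^ k) ^ r ≤ 1 :=
      pow_le_one₀ (by positivity) (mul_le_one₀ hα1 hp0.le hp1)
    have hγ0 : 0 < (α * (ε / 2) ^ k) ^ r := by positivity
    have heq : (α * (ε / 2) ^ k) ^ (r + 1) * m
      = (α * (ε / 2) ^ k) ^ r * (α * ((ε / 2) ^ k * m)) := by ring
    rw [heq] at hm
    have hc := ih _ hm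
    have h1 : 0 < α * ((ε / 2) ^ k * m) := by
      by_contra h
      have := mul_nonpos_of_nonneg_of_nonpos hγ0.le (not_lt.mp h)
      linarith
    have h2 : 2 ≤ α * ((ε / 2) ^ k * m) := by nlinarith
    have h3 : 0 < (ε / 2) ^ k * m := by
      by_contra h
      have := mul_nonpos_of_nonneg_of_nonpos hα0.le (not_lt.mp h)
      linarith
    have h4 : 2 ≤ (ε / 2) ^ k * m := by nlinarith
    refine (CoSize.iter hG hε hε1 ht (min_le_left _ _) k m h4 hc).mono le_rfl ?_
    rcases le_total t (k ^ r) with h | h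
    · rw [min_eq_left h]
      exact (min_le_left _ _).trans (Nat.le_mul_of_pos_left t hk)
    · rw [min_eq_right h, pow_succ, mul_comm k]
      exact min_le_right _ _

lemma edgeDensity_cnt {m : ℕ} (H : SimpleGraph (Fin m)) [DecidableRel H.Adj]
    (A B : Finset (Fin m)) :
    ((H.edgeDensity A B : ℚ) : ℝ) = (cnt H.Adj A B : ℝ) / (A.card * B.card) := by
  unfold cnt SimpleGraph.edgeDensity Rel.edgeDensity
  push_cast
  congr!

lemma densProp_of {I : ∀ n : ℕ, SimpleGraph (Fin n) → Prop} (hI : Hereditary I) {σ ε : ℝ}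
    (hdens : ∀ (n : ℕ) (G : SimpleGraph (Fin n)), 2 ≤ n → I n G →
      ∀ c : ℝ, 0 ≤ c → c ≤ 1 / 2 →
        ∃ A B : Finset (Fin n), Disjoint A B ∧ A.Nonempty ∧ B.Nonempty ∧
          c ^ σ * n ≤ (A.card : ℝ) ∧ ε * n ≤ (B.card : ℝ) ∧
          ((G.edgeDensity A B : ℝ) ≤ c ∨ 1 - c ≤ (G.edgeDensity A B : ℝ)))
    {n : ℕ} (G : SimpleGraph (Fin n)) (hG : I n G) : DensProp G σ ε := by
  intro U hU c hc0 hc1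
  let e : Fin U.card ↪ Fin n := (U.orderEmbOfFin rfl).toEmbedding
  have he : ∀ i, e i ∈ U := fun i => U.orderEmbOfFin_mem rfl i
  have hH : I U.card (G.comap e) := hI _ _ G _ hG ⟨SimpleGraph.Embedding.comap e G⟩
  obtain ⟨A, B, hAB, hA, hB, hAc, hBc, hd⟩ := hdens _ _ hU hH c hc0 hc1
  have hcount : ∀ R : Fin n → Fin n → Prop,
      cnt R (A.map e) (B.map e)
        = cnt (fun a b => R (e a) (e b)) A B := by
    intro R
    unfold cnt Rel.interedges
    rw [← Finset.card_map (e.prodMap e)]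
    congr 1
    ext ⟨x, y⟩
    simp only [Finset.mem_filter, Finset.mem_product, Finset.mem_map, Prod.exists]
    constructor
    · rintro ⟨⟨⟨a, ha, rfl⟩, ⟨b, hb, rfl⟩⟩, hR⟩
      exact ⟨a, b, ⟨⟨ha, hb⟩, hR⟩, rfl⟩
    · rintro ⟨a, b, ⟨⟨ha, hb⟩, hR⟩, h⟩
      simp only [Function.Embedding.coe_prodMap, Prod.map_apply, Prod.mk.injEq] at h
      obtain ⟨rfl, rfl⟩ := h
      exact ⟨⟨⟨a, ha, rfl⟩, ⟨b, hb, rfl⟩⟩, hR⟩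
  refine ⟨A.map e, B.map e, ?_, ?_, (Finset.disjoint_map e).mpr hAB, ?_, ?_, ?_⟩
  · intro x hx
    obtain ⟨a, _, rfl⟩ := Finset.mem_map.mp hx
    exact he a
  · intro x hx
    obtain ⟨a, _, rfl⟩ := Finset.mem_map.mp hx
    exact he a
  · rwa [Finset.card_map]
  · rwa [Finset.card_map]
  · rw [hcount, hcount (fun a b => ¬ G.Adj a b), Finset.card_map, Finset.card_map]
    have hA0 : (0:ℝ) < A.card := by exact_mod_cast hA.card_pos
    have hB0 : (0:ℝ) < B.card := by exact_mod_cast hB.card_pos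
    have hsum : (cnt (fun a b => G.Adj (e a) (e b)) A B : ℝ)
        + (cnt (fun a b => ¬ G.Adj (e a) (e b)) A B : ℝ)
        = A.card * B.card := by
      have := Rel.card_interedges_add_card_interedges_compl
        (fun a b => G.Adj (e a) (e b)) A B
      unfold cnt
      rw [← Nat.cast_mul, ← this]
      push_cast
      congr!
    rw [edgeDensity_cnt] at hd
    change (cnt (fun a b => G.Adj (e a) (e b)) A B : ℝ) / (A.card * B.card) ≤ c ∨
      1 - c ≤ (cnt (fun a b => G.Adj (e a) (e b)) A B : ℝ) / (A.card * B.card) at hd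
    rcases hd with hd | hd
    · left
      rw [div_le_iff₀ (by positivity)] at hd
      linarith
    · right
      rw [le_div_iff₀ (by positivity)] at hd
      linarith

lemma eventually_params (C : ℝ) : ∃ X : ℝ, 2 ≤ X ∧ ∀ x : ℝ, X ≤ x →
    C * Real.sqrt (x * Real.logb 2 x) ≤ x - 1 := by
  have hlo : (fun x : ℝ => Real.log x) =o[Filter.atTop] (fun x : ℝ => x) :=
    Real.isLittleO_log_id_atTop
  set δ : ℝ := Real.log 2 / (4 * (|C| + 1) ^ 2) with hδ
  have hl2 : 0 < Real.log 2 := Real.log_pos (by norm_num)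
  have hδ0 : 0 < δ := by positivity
  obtain ⟨X, hX⟩ := Filter.eventually_atTop.mp (hlo.bound hδ0)
  refine ⟨max X 2, le_max_right _ _, ?_⟩
  intro x hx
  have hx2 : 2 ≤ x := (le_max_right _ _).trans hx
  have h1 := hX x ((le_max_left _ _).trans hx)
  rw [Real.norm_eq_abs, Real.norm_eq_abs, abs_of_nonneg (by linarith : (0:ℝ) ≤ x)] at h1
  have h2 : Real.log x ≤ δ * x := (le_abs_self _).trans h1
  have h3 : Real.logb 2 x ≤ x / (4 * (|C| + 1) ^ 2) := by
    unfold Real.logb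
    rw [div_le_iff₀ hl2]
    calc Real.log x ≤ δ * x := h2
      _ = _ := by rw [hδ]; ring
  have h4 : Real.sqrt (x * Real.logb 2 x) ≤ x / (2 * (|C| + 1)) := by
    apply Real.sqrt_le_iff.mpr
    refine ⟨by positivity, ?_⟩
    calc x * Real.logb 2 x ≤ x * (x / (4 * (|C| + 1) ^ 2)) := by gcongr
      _ = _ := by field_simp; ring
  calc C * Real.sqrt (x * Real.logb 2 x) ≤ (|C| + 1) * (x / (2 * (|C| + 1))) := by
        gcongr
        linarith [le_abs_self C]
    _ = x / 2 := by field_simp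
    _ ≤ x - 1 := by linarith

lemma large_case {n : ℕ} {G : SimpleGraph (Fin n)} {σ ε : ℝ} (hG : DensProp G σ ε)
    (hσ : 0 ≤ σ) (hε : 0 < ε) (hε1 : ε ≤ 1) {C : ℝ}
    (hC : C = 1 + 4 * σ + 2 * Real.logb 2 (2 / ε)) (hn : 2 ≤ n) {x : ℝ}
    (hx : x = Real.logb 2 n) (hx2 : 2 ≤ x) {w : ℝ} (hw : w = Real.sqrt (x * Real.logb 2 x))
    (hwx : C * w ≤ x - 1) :
    ∃ s : Finset (Fin n), IsCograph (G.induce (s : Set (Fin n))) ∧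
      (2 : ℝ) ^ (min 1 (1 / (8 * C)) * w) ≤ s.card := by
  have hn0 : (0:ℝ) < n := by positivity
  have hL : 1 ≤ Real.logb 2 (2 / ε) := by
    rw [Real.le_logb_iff_rpow_le (by norm_num) (by positivity)]
    rw [Real.rpow_one, le_div_iff₀ hε]; linarith
  have hC1 : 1 ≤ C := by linarith
  have hy : 1 ≤ Real.logb 2 x := by
    rw [Real.le_logb_iff_rpow_le (by norm_num) (by linarith)]; simpa using hx2
  have hwsq : w ^ 2 = x * Real.logb 2 x := by rw [hw]; exact Real.sq_sqrt (by positivity)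
  have hw0 : 0 ≤ w := by rw [hw]; positivity
  have hw1 : 1 ≤ w := by nlinarith
  have hxw : x ≤ w ^ 2 := by nlinarith
  set y := Real.logb 2 x with hydef
  set t := ⌈(2:ℝ) ^ w⌉₊ with ht
  set k := ⌈w⌉₊ with hk
  set r := ⌊(x - 1) / (C * w)⌋₊ with hr
  have hCw : 0 < C * w := by positivity
  have h2w : (2:ℝ) ^ w ≤ t := Nat.le_ceil _
  have h2w1 : (1:ℝ) ≤ 2 ^ w := Real.one_le_rpow (by norm_num) hw0
  have ht0 : 0 < t := by
    have : (0:ℝ) < t := by linarith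
    exact_mod_cast this
  have hkw : w ≤ k := Nat.le_ceil _
  have hk0 : 0 < k := by
    have : (0:ℝ) < k := by linarith
    exact_mod_cast this
  have hk2 : (k:ℝ) ≤ 2 * w := by have := Nat.ceil_lt_add_one hw0; linarith
  have ht2 : (t:ℝ) ≤ 2 ^ (w + 1) := by
    rw [Real.rpow_add (by norm_num), Real.rpow_one]
    have := Nat.ceil_lt_add_one (a := (2:ℝ) ^ w) (by positivity); linarith
  have htR : (0:ℝ) < t := by exact_mod_cast ht0
  -- lower bound on gamma
  have hγ : (2:ℝ) ^ (-(C * w)) ≤ (1 / (4 * t : ℝ)) ^ σ / 2 * (ε / 2) ^ k := by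
    have hγ0 : 0 < (1 / (4 * t : ℝ)) ^ σ / 2 * (ε / 2) ^ k := by positivity
    rw [← Real.le_logb_iff_rpow_le (by norm_num) hγ0]
    have hlt : Real.logb 2 t ≤ w + 1 := by
      rw [Real.logb_le_iff_le_rpow (by norm_num) htR]; exact ht2
    have e1 : Real.logb 2 (1 / (4 * t : ℝ)) = -(2 + Real.logb 2 t) := by
      rw [one_div, Real.logb_inv, Real.logb_mul (by norm_num) htR.ne']
      congr 2
      rw [show (4:ℝ) = 2 ^ (2:ℝ) by norm_num]
      exact Real.logb_rpow (by norm_num) (by norm_num)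
    have e2 : Real.logb 2 (ε / 2) = - Real.logb 2 (2 / ε) := by
      rw [← Real.logb_inv, inv_div]
    rw [Real.logb_mul (by positivity) (by positivity), Real.logb_div (by positivity) (by norm_num),
      Real.logb_rpow_eq_mul_logb_of_pos (by positivity), Real.logb_pow, e1, e2,
      Real.logb_self_eq_one (by norm_num)]
    have a1 : σ * (2 + Real.logb 2 t) ≤ σ * (4 * w) := by
      apply mul_le_mul_of_nonneg_left _ hσ; linarith
    have a2 : (k:ℝ) * Real.logb 2 (2 / ε) ≤ 2 * w * Real.logb 2 (2 / ε) := by gcongr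
    rw [hC]
    nlinarith
  have hrle : (r:ℝ) * (C * w) ≤ x - 1 := by
    have := Nat.floor_le (a := (x - 1) / (C * w)) (div_nonneg (by linarith) hCw.le)
    rwa [le_div_iff₀ hCw] at this
  have hq : 1 ≤ (x - 1) / (C * w) := by rw [le_div_iff₀ hCw]; linarith
  have hr1 : 1 ≤ r := Nat.le_floor (by simpa using hq)
  have hr2 : (x - 1) / (C * w) / 2 ≤ r := by
    have := Nat.lt_floor_add_one ((x - 1) / (C * w))
    have h1 : (1:ℝ) ≤ r := by exact_mod_cast hr1
    linarith
  have hxn : (n:ℝ) = 2 ^ x := by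
    rw [hx, Real.rpow_logb (by norm_num) (by norm_num) hn0]
  have hmain : 2 ≤ ((1 / (4 * t : ℝ)) ^ σ / 2 * (ε / 2) ^ k) ^ r * (n:ℝ) := by
    calc (2:ℝ) = 2 ^ (1:ℝ) := by simp
      _ ≤ 2 ^ (-(C * w) * r + x) := by
        apply Real.rpow_le_rpow_of_exponent_le (by norm_num); linarith
      _ = ((2:ℝ) ^ (-(C * w))) ^ r * n := by
        rw [Real.rpow_add (by norm_num), Real.rpow_mul_natCast (by norm_num), hxn]
      _ ≤ _ := by gcongr
  obtain ⟨S, _, hSc, hS⟩ := CoSize.iter2 hG hσ hε hε1 ht0 hk0 r n hmain Finset.univ (by simp)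
  refine ⟨S, hS, ?_⟩
  have hScR : ((min t (k ^ r) : ℕ) : ℝ) ≤ S.card := by exact_mod_cast hSc
  refine le_trans ?_ hScR
  rw [Nat.cast_min]
  refine le_min ?_ ?_
  · refine le_trans (Real.rpow_le_rpow_of_exponent_le (by norm_num) ?_) h2w
    have := mul_le_mul_of_nonneg_right (min_le_left 1 (1 / (8 * C))) hw0
    linarith
  · push_cast
    have hlk : y / 2 ≤ Real.logb 2 k := by
      have h1 : Real.logb 2 x ≤ Real.logb 2 ((k:ℝ) ^ 2) :=
        Real.logb_le_logb_of_le (by norm_num) (by linarith)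
          (hxw.trans (by gcongr))
      rw [Real.logb_pow] at h1
      push_cast at h1
      linarith
    have hkR : (0:ℝ) < k := by exact_mod_cast hk0
    have hkr : (k:ℝ) ^ r = 2 ^ (Real.logb 2 k * r) := by
      rw [Real.rpow_mul_natCast (by norm_num), Real.rpow_logb (by norm_num) (by norm_num) hkR]
    rw [hkr]
    apply Real.rpow_le_rpow_of_exponent_le (by norm_num)
    calc min 1 (1 / (8 * C)) * w ≤ 1 / (8 * C) * w := by
          gcongr; exact min_le_right _ _
      _ = (w ^ 2) / (8 * C * w) := by field_simp
      _ = y / 2 * ((x / 2) / (C * w) / 2) := by rw [hwsq]; field_simp; ring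
      _ ≤ y / 2 * ((x - 1) / (C * w) / 2) := by gcongr; linarith
      _ ≤ Real.logb 2 k * r := by
          have : 0 ≤ Real.logb 2 k := by linarith
          gcongr

/-- If a hereditary class `𝓘` satisfies the polynomial density property with parameters
`σ ≥ 0` and `0 < ε ≤ 1`, then there is `κ > 0` such that every `G ∈ 𝓘` on `n ≥ 2`
vertices contains an induced cograph on at least `2 ^ (κ√(log n · log log n))` vertices
(logs base 2). -/
theorem hereditary_density_to_cograph
    (I : ∀ n : ℕ, SimpleGraph (Fin n) → Prop) (hI : Hereditary I)
    (σ ε : ℝ) (hσ : 0 ≤ σ) (hε0 : 0 < ε) (hε1 : ε ≤ 1)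
    (hdens : ∀ (n : ℕ) (G : SimpleGraph (Fin n)), 2 ≤ n → I n G →
      ∀ c : ℝ, 0 ≤ c → c ≤ 1 / 2 →
        ∃ A B : Finset (Fin n), Disjoint A B ∧ A.Nonempty ∧ B.Nonempty ∧
          c ^ σ * n ≤ (A.card : ℝ) ∧ ε * n ≤ (B.card : ℝ) ∧
          ((G.edgeDensity A B : ℝ) ≤ c ∨ 1 - c ≤ (G.edgeDensity A B : ℝ))) :
    ∃ κ : ℝ, 0 < κ ∧
      ∀ (n : ℕ) (G : SimpleGraph (Fin n)), 2 ≤ n → I n G →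
        ∃ s : Finset (Fin n), IsCograph (G.induce (s : Set (Fin n))) ∧
          (2 : ℝ) ^ (κ * Real.sqrt (Real.logb 2 n * Real.logb 2 (Real.logb 2 n))) ≤
            (s.card : ℝ) := by
  set C := 1 + 4 * σ + 2 * Real.logb 2 (2 / ε) with hC
  have hL : 1 ≤ Real.logb 2 (2 / ε) := by
    rw [Real.le_logb_iff_rpow_le (by norm_num) (by positivity)]
    rw [Real.rpow_one, le_div_iff₀ hε0]; linarith
  have hC1 : 1 ≤ C := by linarith
  obtain ⟨X, hX2, hX⟩ := eventually_params C
  have hX1 : 0 ≤ Real.logb 2 X := Real.logb_nonneg (by norm_num) (by linarith)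
  set W := Real.sqrt (X * Real.logb 2 X) with hW
  have hW0 : 0 ≤ W := Real.sqrt_nonneg _
  refine ⟨min (min 1 (1 / (8 * C))) (1 / (W + 1)), by positivity, ?_⟩
  intro n G hn hG
  have hnR : (2:ℝ) ≤ n := by exact_mod_cast hn
  have hx1 : 1 ≤ Real.logb 2 n := by
    rw [Real.le_logb_iff_rpow_le (by norm_num) (by linarith)]; simpa using hnR
  set x := Real.logb 2 n with hx
  have hD := densProp_of hI hdens G hG
  rcases le_total X x with h | h
  · obtain ⟨s, hs, hc⟩ := large_case hD hσ hε0 hε1 hC hn hx (hX2.trans h) rfl (hX x h)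
    refine ⟨s, hs, le_trans ?_ hc⟩
    apply Real.rpow_le_rpow_of_exponent_le (by norm_num)
    exact mul_le_mul_of_nonneg_right (min_le_left _ _) (Real.sqrt_nonneg _)
  · obtain ⟨s, _, hs⟩ := Finset.exists_subset_card_eq
      (show 2 ≤ (Finset.univ : Finset (Fin n)).card by simpa using hn)
    refine ⟨s, cograph_small G s (by omega), ?_⟩
    rw [hs]
    have hlog : Real.logb 2 x ≤ Real.logb 2 X :=
      Real.logb_le_logb_of_le (by norm_num) (by linarith) h
    have hle : Real.sqrt (x * Real.logb 2 x) ≤ W := by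
      apply Real.sqrt_le_sqrt
      have : 0 ≤ Real.logb 2 x := Real.logb_nonneg (by norm_num) hx1
      gcongr
    calc (2:ℝ) ^ (min (min 1 (1 / (8 * C))) (1 / (W + 1)) * Real.sqrt (x * Real.logb 2 x))
        ≤ 2 ^ (1:ℝ) := by
          apply Real.rpow_le_rpow_of_exponent_le (by norm_num)
          calc _ ≤ (1 / (W + 1)) * W := by gcongr; exact min_le_right _ _
            _ ≤ 1 := by rw [one_div, inv_mul_le_iff₀ (by positivity)]; linarith
      _ = _ := by simp
end
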